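/- Theorem 1.1(i): Let v be a classical solution of v_t = v_rr + ((m−1)/r) v_r − (b(r,t)/r²) v on [0,R] × (t1,t2) which is not identically zero and satisfies the boundary condition (1.5). Then for every t ∈ (t1,t2) the zero number Z(v(·,t)) is finite. -/

import Mathlib

open Set Filter


def Good (R : ℝ) (h : ℝ → ℝ) : Prop :=
  ContinuousOn h (Ioo 0 R) ∧ ∃ M, ∀ r ∈ Ioo 0 R, |h r| ≤ M

namespace Good
variable {R : ℝ} {f g : ℝ → ℝ}

theorem add (hf : Good R f) (hg : Good R g) : Good R (fun r => f r + g r) := by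
  obtain ⟨cf, M, hM⟩ := hf
  obtain ⟨cg, N, hN⟩ := hg
  exact ⟨cf.add cg, M + N, fun r hr => (abs_add_le _ _).trans (add_le_add (hM r hr) (hN r hr))⟩

theorem mul (hf : Good R f) (hg : Good R g) : Good R (fun r => f r * g r) := by
  obtain ⟨cf, M, hM⟩ := hf
  obtain ⟨cg, N, hN⟩ := hg
  refine ⟨cf.mul cg, M * N, fun r hr => ?_⟩
  rw [abs_mul]
  exact mul_le_mul (hM r hr) (hN r hr) (abs_nonneg _) ((abs_nonneg _).trans (hM r hr))

theorem const (c : ℝ) : Good R (fun _ => c) := ⟨continuousOn_const, |c|, fun _ _ => le_rfl⟩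

theorem neg (hf : Good R f) : Good R (fun r => - f r) := by
  obtain ⟨cf, M, hM⟩ := hf
  exact ⟨cf.neg, M, fun r hr => by rw [abs_neg]; exact hM r hr⟩

theorem sub (hf : Good R f) (hg : Good R g) : Good R (fun r => f r - g r) := by
  simpa only [sub_eq_add_neg] using hf.add hg.neg

theorem sq (hf : Good R f) : Good R (fun r => f r ^ 2) := by
  simpa only [pow_two] using hf.mul hf

theorem congr (hf : Good R f) (h : ∀ r ∈ Ioo 0 R, g r = f r) : Good R g := by
  obtain ⟨cf, M, hM⟩ := hf
  exact ⟨cf.congr h, M, fun r hr => by rw [h r hr]; exact hM r hr⟩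

theorem of_cont (hf : ContinuousOn f (Icc 0 R)) : Good R f := by
  obtain ⟨M, hM⟩ := isCompact_Icc.exists_bound_of_continuousOn hf
  exact ⟨hf.mono Ioo_subset_Icc_self, M, fun r hr => by
    simpa using hM r (Ioo_subset_Icc_self hr)⟩

theorem ii (hR : 0 < R) (hf : Good R f) : IntervalIntegrable f MeasureTheory.volume 0 R := by
  rw [intervalIntegrable_iff_integrableOn_Ioo_of_le hR.le]
  obtain ⟨cf, M, hM⟩ := hf
  have : MeasureTheory.IsFiniteMeasure (MeasureTheory.volume.restrict (Ioo 0 R)) :=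
    ⟨by simp⟩
  refine MeasureTheory.Integrable.of_bound (cf.aestronglyMeasurable measurableSet_Ioo) M ?_
  rw [MeasureTheory.ae_restrict_iff' measurableSet_Ioo]
  exact Filter.Eventually.of_forall (fun r hr => by simpa using hM r hr)

theorem ftc {F : ℝ → ℝ} (hR : 0 < R) (hf : Good R f) (hF : ContinuousOn F (Icc 0 R))
    (hd : ∀ r ∈ Ioo 0 R, HasDerivAt F (f r) r) : ∫ r in (0:ℝ)..R, f r = F R - F 0 :=
  intervalIntegral.integral_eq_sub_of_hasDerivAt_of_le hR.le hF hd (hf.ii hR)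

theorem mono (hR : 0 < R) (hf : Good R f) (hg : Good R g) (h : ∀ r ∈ Ioo 0 R, f r ≤ g r) :
    ∫ r in (0:ℝ)..R, f r ≤ ∫ r in (0:ℝ)..R, g r :=
  intervalIntegral.integral_mono_on_of_le_Ioo hR.le (hf.ii hR) (hg.ii hR) h

theorem int_congr (hR : 0 < R) (h : ∀ r ∈ Ioo 0 R, f r = g r) :
    ∫ r in (0:ℝ)..R, f r = ∫ r in (0:ℝ)..R, g r := by
  rw [intervalIntegral.integral_of_le hR.le, intervalIntegral.integral_of_le hR.le,
    MeasureTheory.integral_Ioc_eq_integral_Ioo, MeasureTheory.integral_Ioc_eq_integral_Ioo]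
  exact MeasureTheory.setIntegral_congr_fun measurableSet_Ioo h

end Good

/-- Gaussian weight. -/
noncomputable def wt (r0 α r : ℝ) : ℝ := Real.exp (-(α / 2) * (r - r0) ^ 2)

theorem wt_pos (r0 α r : ℝ) : 0 < wt r0 α r := Real.exp_pos _

theorem wt_deriv (r0 α r : ℝ) : HasDerivAt (wt r0 α) (-(α * (r - r0)) * wt r0 α r) r := by
  have h : HasDerivAt (fun r : ℝ => -(α / 2) * (r - r0) ^ 2)
      (-(α / 2) * (((2:ℕ):ℝ) * (r - r0) ^ (2 - 1) * 1)) r :=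
    (((hasDerivAt_id r).sub_const r0).pow 2).const_mul _
  have := h.exp
  refine this.congr_deriv ?_
  unfold wt; norm_num; ring

theorem wt_cont (r0 α : ℝ) : Continuous (wt r0 α) := by unfold wt; fun_prop

set_option maxHeartbeats 2000000 in
theorem fixed_time {R c C K r0 α : ℝ} (hR : 0 < R) (hc : 3 / 4 ≤ c) (hr0 : r0 ∈ Icc 0 R)
    (hα : 0 < α)
    {f0 f1 f2 g0 g1 : ℝ → ℝ}
    (h0 : ContinuousOn f0 (Icc 0 R)) (h1 : ContinuousOn f1 (Icc 0 R))
    (h2 : ContinuousOn f2 (Ioo 0 R)) (k0 : ContinuousOn g0 (Icc 0 R))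
    (k1 : Good R g1)
    (d0 : ∀ r ∈ Ioo 0 R, HasDerivAt f0 (f1 r) r)
    (d1 : ∀ r ∈ Ioo 0 R, HasDerivAt f1 (f2 r) r)
    (e0 : ∀ r ∈ Ioo 0 R, HasDerivAt g0 (g1 r) r)
    (b0 : ∀ r ∈ Icc 0 R, |f0 r| ≤ K * (r * √r))
    (b1 : ∀ r ∈ Icc 0 R, |f1 r| ≤ K * √r)
    (b2 : ∀ r ∈ Icc 0 R, |g0 r| ≤ K * r)
    (hf0R : f0 R = 0) (hg0R : g0 R = 0)
    (pde : ∀ r ∈ Ioo 0 R, |g0 r - f2 r + c / r ^ 2 * f0 r| ≤ C * (|f0 r| / r + |f1 r|))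
    {H D H' D' : ℝ}
    (hH : H = ∫ r in (0:ℝ)..R, f0 r ^ 2 * wt r0 α r)
    (hD : D = ∫ r in (0:ℝ)..R, (f1 r ^ 2 + c * (f0 r / r) ^ 2) * wt r0 α r)
    (hH' : H' = ∫ r in (0:ℝ)..R, (2 * f0 r * g0 r - f0 r ^ 2 * (α * (r - r0)) ^ 2) * wt r0 α r)
    (hD' : D' = ∫ r in (0:ℝ)..R, (2 * f1 r * g1 r + 2 * c * (f0 r / r) * (g0 r / r)
        - (f1 r ^ 2 + c * (f0 r / r) ^ 2) * (α * (r - r0)) ^ 2) * wt r0 α r) :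
    -(2 + 4 * C ^ 2) * D - (1 + α) * H ≤ H' ∧ H' ≤ (1 + 2 * C ^ 2) * H ∧
    (0 < H → (D' - 2 * α * D) * H - D * H' ≤ 2 * C ^ 2 * D * H) := by
  have gW : Good R (wt r0 α) := .of_cont (wt_cont r0 α).continuousOn
  have gY : Good R (fun r => α * (r - r0)) := .of_cont (by fun_prop)
  have gf0 : Good R f0 := .of_cont h0
  have gf1 : Good R f1 := .of_cont h1
  have gg0 : Good R g0 := .of_cont k0
  have gid : Good R (fun r => r) := .of_cont (by fun_prop)
  have gsq : Good R (fun r => √r) := .of_cont (by fun_prop)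
  have ge : Good R (fun r => f0 r / (r * √r)) := by
    refine ⟨(h0.mono Ioo_subset_Icc_self).div (by fun_prop) ?_, K, ?_⟩
    · intro r hr; have := Real.sqrt_pos.2 hr.1; have := hr.1; positivity
    · intro r hr
      have := Real.sqrt_pos.2 hr.1; have := hr.1
      rw [abs_div, abs_of_pos (a := r * √r) (by positivity), div_le_iff₀ (by positivity)]
      exact b0 r (Ioo_subset_Icc_self hr)
  have gd : Good R (fun r => f1 r / √r) := by
    refine ⟨(h1.mono Ioo_subset_Icc_self).div (by fun_prop) ?_, K, ?_⟩
    · intro r hr; have := Real.sqrt_pos.2 hr.1; positivity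
    · intro r hr
      have := Real.sqrt_pos.2 hr.1
      rw [abs_div, abs_of_pos this, div_le_iff₀ (by positivity)]
      exact b1 r (Ioo_subset_Icc_self hr)
  have gk : Good R (fun r => g0 r / r) := by
    refine ⟨(k0.mono Ioo_subset_Icc_self).div (by fun_prop) ?_, K, ?_⟩
    · intro r hr; exact hr.1.ne'
    · intro r hr
      rw [abs_div, abs_of_pos hr.1, div_le_iff₀ hr.1]
      exact b2 r (Ioo_subset_Icc_self hr)
  have gf0r : Good R (fun r => f0 r / r) := (ge.mul gsq).congr (fun r hr => by
    have := Real.sqrt_pos.2 hr.1; have := hr.1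
    field_simp)
  have ge2 : Good R (fun r => f0 r ^ 2 / r ^ 3) := ge.sq.congr (fun r hr => by
    have := hr.1
    rw [div_pow, mul_pow, Real.sq_sqrt this.le]; congr 1)
  have ged : Good R (fun r => f0 r * f1 r / r ^ 2) := (ge.mul gd).congr (fun r hr => by
    have := hr.1
    rw [div_mul_div_comm, mul_assoc, Real.mul_self_sqrt this.le, pow_two])
  -- the error term
  obtain ⟨g, hg⟩ : ∃ g : ℝ → ℝ, ∀ r, g r = g0 r - f2 r + c / r ^ 2 * f0 r := ⟨_, fun _ => rfl⟩
  have gg : Good R g := by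
    refine ⟨?_, ?_⟩
    · have : g = fun r => g0 r - f2 r + c / r ^ 2 * f0 r := funext hg
      rw [this]
      refine ((k0.mono Ioo_subset_Icc_self).sub h2).add
        (ContinuousOn.mul (continuousOn_const.div (by fun_prop) ?_) (h0.mono Ioo_subset_Icc_self))
      intro r hr; have := hr.1; positivity
    · obtain ⟨_, M, hM⟩ := gf0r
      obtain ⟨_, N, hN⟩ := gf1
      refine ⟨|C| * (M + N), fun r hr => ?_⟩
      rw [hg]
      refine (pde r hr).trans ?_
      have h3 := hM r hr
      rw [abs_div, abs_of_pos hr.1] at h3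
      have h4 := hN r hr
      have h5 : 0 ≤ |f0 r| / r + |f1 r| := by have := hr.1; positivity
      exact mul_le_mul (le_abs_self C) (add_le_add h3 h4) h5 (abs_nonneg _)
  obtain ⟨a, ha⟩ : ∃ a : ℝ → ℝ, ∀ r, a r = - g0 r + α * (r - r0) * f1 r + g r := ⟨_, fun _ => rfl⟩
  have ga : Good R a := ((gg0.neg.add (gY.mul gf1)).add gg).congr (fun r _ => ha r)
  have hf2 : ∀ r, f2 r = - a r + α * (r - r0) * f1 r + c / r ^ 2 * f0 r := by
    intro r; rw [ha, hg]; ring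
  have hCg : ∀ r ∈ Ioo 0 R, g r ^ 2 ≤ 4 * C ^ 2 * (f1 r ^ 2 + c * (f0 r / r) ^ 2) := by
    intro r hr
    have h3 := pde r hr
    rw [← hg] at h3
    have h5 : 0 ≤ |f0 r| / r + |f1 r| := by have := hr.1; positivity
    have h4 : g r ^ 2 ≤ (C * (|f0 r| / r + |f1 r|)) ^ 2 := by
      rw [← sq_abs (g r)]; exact pow_le_pow_left₀ (abs_nonneg _) h3 2
    have h6 : (|f0 r| / r + |f1 r|) ^ 2 ≤ 4 * (f1 r ^ 2 + c * (f0 r / r) ^ 2) := by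
      have e1 : f1 r ^ 2 = |f1 r| ^ 2 := (sq_abs _).symm
      have e2 : (f0 r / r) ^ 2 = (|f0 r| / r) ^ 2 := by rw [div_pow, div_pow, sq_abs]
      rw [e1, e2]
      nlinarith [sq_nonneg (|f0 r| / r - |f1 r|), sq_nonneg (|f0 r| / r), sq_nonneg (|f1 r|),
        mul_le_mul_of_nonneg_right hc (sq_nonneg (|f0 r| / r))]
    nlinarith [sq_nonneg C, mul_le_mul_of_nonneg_left h6 (sq_nonneg C)]
  have W := wt_pos r0 α
  have gDd : Good R (fun r => (f1 r ^ 2 + c * (f0 r / r) ^ 2) * wt r0 α r) :=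
    (gf1.sq.add ((Good.const c).mul gf0r.sq)).mul gW
  have gHd : Good R (fun r => f0 r ^ 2 * wt r0 α r) := gf0.sq.mul gW
  have gua : Good R (fun r => f0 r * a r * wt r0 α r) := (gf0.mul ga).mul gW
  have gug : Good R (fun r => f0 r * g r * wt r0 α r) := (gf0.mul gg).mul gW
  have gaa : Good R (fun r => a r ^ 2 * wt r0 α r) := ga.sq.mul gW
  have gag : Good R (fun r => a r * g r * wt r0 α r) := (ga.mul gg).mul gW
  have ggg : Good R (fun r => g r ^ 2 * wt r0 α r) := gg.sq.mul gW
  have hf00 : f0 0 = 0 := by simpa using b0 0 ⟨le_rfl, hR.le⟩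
  have hf10 : f1 0 = 0 := by simpa using b1 0 ⟨le_rfl, hR.le⟩
  have hg00 : g0 0 = 0 := by simpa using b2 0 ⟨le_rfl, hR.le⟩
  have cW := (wt_cont r0 α).continuousOn (s := Icc 0 R)
  -- L1
  have L1 : D = ∫ r in (0:ℝ)..R, f0 r * a r * wt r0 α r := by
    have G1 : Good R (fun r => (f1 r ^ 2 + c * (f0 r / r) ^ 2) * wt r0 α r
        - f0 r * a r * wt r0 α r) := gDd.sub gua
    have := G1.ftc hR (F := fun r => f0 r * f1 r * wt r0 α r) ((h0.mul h1).mul cW) (by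
      intro r hr
      have := ((d0 r hr).mul (d1 r hr)).mul (wt_deriv r0 α r)
      refine this.congr_deriv (Eq.symm ?_)
      have := hr.1
      try simp only [Pi.mul_apply]
      rw [hf2]; field_simp; ring)
    rw [intervalIntegral.integral_sub (gDd.ii hR) (gua.ii hR), ← hD] at this
    simp only [hf0R, hf00] at this
    linarith
  have L2 : H' = -2 * D + 2 * (∫ r in (0:ℝ)..R, f0 r * g r * wt r0 α r) - α * H := by
    have G1 : Good R (fun r => (2 * f0 r * f1 r * (α * (r - r0)) + f0 r ^ 2 * α
        - f0 r ^ 2 * (α * (r - r0)) ^ 2) * wt r0 α r) :=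
      ((((((Good.const 2).mul gf0).mul gf1).mul gY).add (gf0.sq.mul (.const α))).sub
        (gf0.sq.mul gY.sq)).mul gW
    have key := G1.ftc hR (F := fun r => f0 r * f0 r * (α * (r - r0)) * wt r0 α r)
      (((h0.mul h0).mul (by fun_prop)).mul cW) (by
      intro r hr
      have := (((d0 r hr).mul (d0 r hr)).mul
        (((hasDerivAt_id r).sub_const r0).const_mul α)).mul (wt_deriv r0 α r)
      refine this.congr_deriv (Eq.symm ?_)
      try simp only [Pi.mul_apply, id]
      ring)
    simp only [hf0R, hf00] at key
    have : H' = ∫ r in (0:ℝ)..R, ((-2 * (f0 r * a r * wt r0 α r) + 2 * (f0 r * g r * wt r0 α r)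
        - α * (f0 r ^ 2 * wt r0 α r)) + (2 * f0 r * f1 r * (α * (r - r0)) + f0 r ^ 2 * α
        - f0 r ^ 2 * (α * (r - r0)) ^ 2) * wt r0 α r) := by
      rw [hH']
      refine Good.int_congr hR (fun r hr => ?_)
      rw [ha]; ring
    rw [this, intervalIntegral.integral_add _ (G1.ii hR), intervalIntegral.integral_sub,
      intervalIntegral.integral_add, intervalIntegral.integral_const_mul,
      intervalIntegral.integral_const_mul, intervalIntegral.integral_const_mul, key, ← L1, ← hH]
    · ring
    · exact ((Good.const _).mul gua).ii hR
    · exact ((Good.const _).mul gug).ii hR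
    · exact (((Good.const _).mul gua).add ((Good.const _).mul gug)).ii hR
    · exact ((Good.const _).mul gHd).ii hR
    · exact ((((Good.const _).mul gua).add ((Good.const _).mul gug)).sub
        ((Good.const _).mul gHd)).ii hR
  have L3 : D' ≤ -2 * (∫ r in (0:ℝ)..R, a r ^ 2 * wt r0 α r)
      + 2 * (∫ r in (0:ℝ)..R, a r * g r * wt r0 α r) + α * D := by
    have G1 : Good R (fun r => (2 * f1 r * g1 r - 2 * g0 r * a r
        + 2 * c * (f0 r / r) * (g0 r / r)) * wt r0 α r) :=
      (((((Good.const 2).mul gf1).mul k1).sub (((Good.const 2).mul gg0).mul ga)).add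
        (((Good.const (2 * c)).mul gf0r).mul gk)).mul gW
    have key1 := G1.ftc hR (F := fun r => 2 * f1 r * g0 r * wt r0 α r)
      (((continuousOn_const.mul h1).mul k0).mul cW) (by
      intro r hr
      have := (((d1 r hr).const_mul 2).mul (e0 r hr)).mul (wt_deriv r0 α r)
      refine this.congr_deriv (Eq.symm ?_)
      have := hr.1
      try simp only [Pi.mul_apply]
      rw [hf2]; field_simp; ring)
    simp only [hg0R, hg00] at key1
    have G2 : Good R (fun r => (2 * (f1 r * (-a r + α * (r - r0) * f1 r))
        * (α * (r - r0)) + 2 * c * (f0 r ^ 2 / r ^ 3) * (α * (r - r0))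
        + (f1 r ^ 2 - c * (f0 r / r) ^ 2) * (α - (α * (r - r0)) ^ 2)) * wt r0 α r) :=
      (((((Good.const 2).mul (gf1.mul (ga.neg.add (gY.mul gf1)))).mul gY).add
        (((Good.const (2 * c)).mul ge2).mul gY)).add ((gf1.sq.sub ((Good.const c).mul gf0r.sq)).mul
          ((Good.const α).sub gY.sq))).mul gW
    have cF : ContinuousOn (fun r => f0 r / r) (Icc 0 R) := by
      intro r hr
      rcases eq_or_lt_of_le hr.1 with h | h
      · subst h
        have : Tendsto (fun r => K * √r) (nhdsWithin 0 (Icc 0 R)) (nhds 0) := by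
          have : Continuous (fun r => K * √r) := by fun_prop
          have := this.tendsto 0
          simp only [Real.sqrt_zero, mul_zero] at this
          exact this.mono_left nhdsWithin_le_nhds
        unfold ContinuousWithinAt
        simp only [div_zero]
        refine squeeze_zero_norm' ?_ this
        filter_upwards [self_mem_nhdsWithin] with r hr
        rcases eq_or_lt_of_le hr.1 with h | h
        · simp [← h]
        · rw [Real.norm_eq_abs, abs_div, abs_of_pos h, div_le_iff₀ h]
          refine (b0 r hr).trans (le_of_eq ?_)
          ring
      · exact (h0 r hr).div continuousWithinAt_id h.ne'
    have key2 := G2.ftc hR (F := fun r => (f1 r * f1 r - c * (f0 r / r * (f0 r / r)))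
        * (α * (r - r0)) * wt r0 α r)
      ((((h1.mul h1).sub (continuousOn_const.mul (cF.mul cF))).mul (by fun_prop)).mul cW) (by
      intro r hr
      have hdiv := (d0 r hr).div (hasDerivAt_id r) hr.1.ne'
      have := ((((d1 r hr).mul (d1 r hr)).sub ((hdiv.mul hdiv).const_mul c)).mul
        (((hasDerivAt_id r).sub_const r0).const_mul α)).mul (wt_deriv r0 α r)
      refine this.congr_deriv (Eq.symm ?_)
      have := hr.1
      try simp only [Pi.mul_apply, Pi.sub_apply, Pi.div_apply, id]
      rw [hf2]; field_simp; ring)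
    have key3 : 0 ≤ ∫ r in (0:ℝ)..R, (2 * (f1 r * (-a r + α * (r - r0) * f1 r))
        * (α * (r - r0)) + 2 * c * (f0 r ^ 2 / r ^ 3) * (α * (r - r0))
        + (f1 r ^ 2 - c * (f0 r / r) ^ 2) * (α - (α * (r - r0)) ^ 2)) * wt r0 α r := by
      rw [key2]
      simp only [hf0R, hf00, hf10]
      have := W R
      have : 0 ≤ R - r0 := by linarith [hr0.2]
      have h3 : 0 ≤ f1 R * f1 R * (α * (R - r0)) * wt r0 α R := by
        have := mul_self_nonneg (f1 R)
        positivity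
      simpa using h3
    have GS : Good R (fun r => -2 * (a r ^ 2 * wt r0 α r) + 2 * (a r * g r * wt r0 α r)
        + α * ((f1 r ^ 2 + c * (f0 r / r) ^ 2) * wt r0 α r)) :=
        ((((Good.const _).mul gaa).add ((Good.const _).mul gag)).add
        ((Good.const _).mul gDd))
    have : D' ≤ ∫ r in (0:ℝ)..R, ((-2 * (a r ^ 2 * wt r0 α r) + 2 * (a r * g r * wt r0 α r)
        + α * ((f1 r ^ 2 + c * (f0 r / r) ^ 2) * wt r0 α r))
        + (2 * f1 r * g1 r - 2 * g0 r * a r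
        + 2 * c * (f0 r / r) * (g0 r / r)) * wt r0 α r - (2 * (f1 r * (-a r + α * (r - r0) * f1 r))
        * (α * (r - r0)) + 2 * c * (f0 r ^ 2 / r ^ 3) * (α * (r - r0))
        + (f1 r ^ 2 - c * (f0 r / r) ^ 2) * (α - (α * (r - r0)) ^ 2)) * wt r0 α r) := by
      rw [hD']
      refine Good.mono hR ?_ ((GS.add G1).sub G2) ?_
      · exact (((((Good.const 2).mul gf1).mul k1).add (((Good.const (2 * c)).mul gf0r).mul gk)).sub
          ((gf1.sq.add ((Good.const c).mul gf0r.sq)).mul gY.sq)).mul gW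
      · intro r hr
        have hr' := hr.1
        have hpos : 0 ≤ 2 * α * c * r0 * (f0 r ^ 2 / r ^ 3) * wt r0 α r := by
          have := W r; have := hr0.1
          have : 0 ≤ c := by linarith
          positivity
        rw [← sub_nonneg]
        convert hpos using 1
        have : g r = g0 r + a r - α * (r - r0) * f1 r := by rw [ha]; ring
        rw [this]
        field_simp
        ring
    rw [intervalIntegral.integral_sub, intervalIntegral.integral_add _ (G1.ii hR), key1,
      intervalIntegral.integral_add, intervalIntegral.integral_add,
      intervalIntegral.integral_const_mul,
      intervalIntegral.integral_const_mul, intervalIntegral.integral_const_mul, ← hD] at this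
    · linarith
    · exact ((Good.const _).mul gaa).ii hR
    · exact ((Good.const _).mul gag).ii hR
    · exact (((Good.const _).mul gaa).add ((Good.const _).mul gag)).ii hR
    · exact ((Good.const _).mul gDd).ii hR
    · exact GS.ii hR
    · exact (GS.add G1).ii hR
    · exact G2.ii hR
  have LQ : (∫ r in (0:ℝ)..R, g r ^ 2 * wt r0 α r) ≤ 4 * C ^ 2 * D := by
    rw [hD, ← intervalIntegral.integral_const_mul]
    refine Good.mono hR ggg ((Good.const _).mul gDd) (fun r hr => ?_)
    have := mul_le_mul_of_nonneg_right (hCg r hr) (W r).le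
    linarith
  have hD0 : 0 ≤ D := by
    rw [hD]
    refine intervalIntegral.integral_nonneg hR.le (fun r _ => ?_)
    have := W r
    have : 0 ≤ c := by linarith
    positivity
  set A := ∫ r in (0:ℝ)..R, a r ^ 2 * wt r0 α r with hA
  set B := ∫ r in (0:ℝ)..R, a r * g r * wt r0 α r with hB
  set F := ∫ r in (0:ℝ)..R, f0 r * g r * wt r0 α r with hF
  set Q := ∫ r in (0:ℝ)..R, g r ^ 2 * wt r0 α r with hQ
  have young : ∀ l : ℝ, 0 < l → 2 * F ≤ l * H + l⁻¹ * Q ∧ -(l * H + l⁻¹ * Q) ≤ 2 * F := by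
    intro l hl
    have e : l * H + l⁻¹ * Q = ∫ r in (0:ℝ)..R, (l * (f0 r ^ 2 * wt r0 α r)
        + l⁻¹ * (g r ^ 2 * wt r0 α r)) := by
      rw [intervalIntegral.integral_add, intervalIntegral.integral_const_mul,
        intervalIntegral.integral_const_mul, hH]
      · exact ((Good.const _).mul gHd).ii hR
      · exact ((Good.const _).mul ggg).ii hR
    have GG : Good R (fun r => l * (f0 r ^ 2 * wt r0 α r)
        + l⁻¹ * (g r ^ 2 * wt r0 α r)) := ((Good.const _).mul gHd).add ((Good.const _).mul ggg)
    rw [e, ← intervalIntegral.integral_neg, hF, ← intervalIntegral.integral_const_mul]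
    constructor
    · refine Good.mono hR ((Good.const _).mul gug) GG (fun r _ => ?_)
      have : 0 ≤ (l * f0 r - g r) ^ 2 * l⁻¹ * wt r0 α r := by have := W r; positivity
      have e2 : (l * f0 r - g r) ^ 2 * l⁻¹ * wt r0 α r = (l * (f0 r ^ 2 * wt r0 α r)
        + l⁻¹ * (g r ^ 2 * wt r0 α r)) - 2 * (f0 r * g r * wt r0 α r) := by field_simp; ring
      linarith
    · refine Good.mono hR GG.neg ((Good.const _).mul gug) (fun r _ => ?_)
      have : 0 ≤ (l * f0 r + g r) ^ 2 * l⁻¹ * wt r0 α r := by have := W r; positivity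
      have e2 : (l * f0 r + g r) ^ 2 * l⁻¹ * wt r0 α r = (l * (f0 r ^ 2 * wt r0 α r)
        + l⁻¹ * (g r ^ 2 * wt r0 α r)) + 2 * (f0 r * g r * wt r0 α r) := by field_simp; ring
      linarith
  have hH0 : 0 ≤ H := by
    rw [hH]
    refine intervalIntegral.integral_nonneg hR.le (fun r _ => ?_)
    have := W r
    positivity
  refine ⟨?_, ?_, ?_⟩
  · have := (young 1 one_pos).2
    rw [L2]
    norm_num at this
    nlinarith
  · have h1 := (young (1 + 2 * C ^ 2) (by positivity)).1
    have h2 : (1 + 2 * C ^ 2)⁻¹ * Q ≤ 2 * D := by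
      rw [inv_mul_le_iff₀ (by positivity)]
      nlinarith
    rw [L2]
    nlinarith
  · intro hHp
    have cs : (D - F / 2) ^ 2 ≤ H * (A - B + Q / 4) := by
      have q : ∀ l : ℝ, 0 ≤ (A - B + Q / 4) - 2 * l * (D - F / 2) + l ^ 2 * H := by
        intro l
        have e : (A - B + Q / 4) - 2 * l * (D - F / 2) + l ^ 2 * H =
            ∫ r in (0:ℝ)..R, (a r - g r / 2 - l * f0 r) ^ 2 * wt r0 α r := by
          have e1 : (∫ r in (0:ℝ)..R, (a r - g r / 2 - l * f0 r) ^ 2 * wt r0 α r) =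
            ∫ r in (0:ℝ)..R, (a r ^ 2 * wt r0 α r + (-1) * (a r * g r * wt r0 α r)
              + (1 / 4) * (g r ^ 2 * wt r0 α r) + (-2 * l) * (f0 r * a r * wt r0 α r)
              + l * (f0 r * g r * wt r0 α r) + l ^ 2 * (f0 r ^ 2 * wt r0 α r)) := by
            congr 1; ext r; ring
          have i1 := gaa
          have i2 := i1.add ((Good.const (-1)).mul gag)
          have i3 := i2.add ((Good.const (1/4)).mul ggg)
          have i4 := i3.add ((Good.const (-2 * l)).mul gua)
          have i5 := i4.add ((Good.const l).mul gug)
          rw [e1, intervalIntegral.integral_add (i5.ii hR) (((Good.const _).mul gHd).ii hR),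
            intervalIntegral.integral_add (i4.ii hR) (((Good.const _).mul gug).ii hR),
            intervalIntegral.integral_add (i3.ii hR) (((Good.const _).mul gua).ii hR),
            intervalIntegral.integral_add (i2.ii hR) (((Good.const _).mul ggg).ii hR),
            intervalIntegral.integral_add (i1.ii hR) (((Good.const _).mul gag).ii hR),
            intervalIntegral.integral_const_mul, intervalIntegral.integral_const_mul,
            intervalIntegral.integral_const_mul, intervalIntegral.integral_const_mul,
            intervalIntegral.integral_const_mul, ← L1, ← hH]
          ring
        rw [e]
        refine intervalIntegral.integral_nonneg hR.le (fun r _ => ?_)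
        have := W r
        positivity
      have h1 := q ((D - F / 2) / H)
      have h2 := mul_nonneg hHp.le h1
      have e : H * ((A - B + Q / 4) - 2 * ((D - F / 2) / H) * (D - F / 2)
          + ((D - F / 2) / H) ^ 2 * H) = H * (A - B + Q / 4) - (D - F / 2) ^ 2 := by
        field_simp; ring
      linarith
    have h1 := mul_le_mul_of_nonneg_right L3 hHp.le
    have h2 := mul_le_mul_of_nonneg_right LQ hHp.le
    rw [L2]
    linarith [sq_nonneg F]


structure Sol (R c C K τ1 τ2 : ℝ) (u ur urr ut urt : ℝ → ℝ → ℝ) : Prop where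
  hR : 0 < R
  hc : 3 / 4 ≤ c
  h0 : ∀ t ∈ Ioo τ1 τ2, ContinuousOn (fun r => u r t) (Icc 0 R)
  h1 : ∀ t ∈ Ioo τ1 τ2, ContinuousOn (fun r => ur r t) (Icc 0 R)
  h2 : ∀ t ∈ Ioo τ1 τ2, ContinuousOn (fun r => urr r t) (Ioo 0 R)
  k0 : ∀ t ∈ Ioo τ1 τ2, ContinuousOn (fun r => ut r t) (Icc 0 R)
  k1 : ∀ t ∈ Ioo τ1 τ2, ContinuousOn (fun r => urt r t) (Ioo 0 R)
  d0 : ∀ t ∈ Ioo τ1 τ2, ∀ r ∈ Ioo 0 R, HasDerivAt (fun r => u r t) (ur r t) r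
  d1 : ∀ t ∈ Ioo τ1 τ2, ∀ r ∈ Ioo 0 R, HasDerivAt (fun r => ur r t) (urr r t) r
  e0 : ∀ t ∈ Ioo τ1 τ2, ∀ r ∈ Ioo 0 R, HasDerivAt (fun r => ut r t) (urt r t) r
  t0 : ∀ t ∈ Ioo τ1 τ2, ∀ r ∈ Ioo 0 R, HasDerivAt (fun t => u r t) (ut r t) t
  t1 : ∀ t ∈ Ioo τ1 τ2, ∀ r ∈ Ioo 0 R, HasDerivAt (fun t => ur r t) (urt r t) t
  b0 : ∀ t ∈ Ioo τ1 τ2, ∀ r ∈ Icc 0 R, |u r t| ≤ K * (r * √r)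
  b1 : ∀ t ∈ Ioo τ1 τ2, ∀ r ∈ Icc 0 R, |ur r t| ≤ K * √r
  b2 : ∀ t ∈ Ioo τ1 τ2, ∀ r ∈ Icc 0 R, |ut r t| ≤ K * r
  b3 : ∀ t ∈ Ioo τ1 τ2, ∀ r ∈ Ioo 0 R, |urt r t| ≤ K
  uR : ∀ t ∈ Ioo τ1 τ2, u R t = 0
  utR : ∀ t ∈ Ioo τ1 τ2, ut R t = 0
  pde : ∀ t ∈ Ioo τ1 τ2, ∀ r ∈ Ioo 0 R,
    |ut r t - urr r t + c / r ^ 2 * u r t| ≤ C * (|u r t| / r + |ur r t|)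

theorem deriv_under {R τ1 τ2 t0 : ℝ} (hR : 0 < R) (ht0 : t0 ∈ Ioo τ1 τ2) {F F' : ℝ → ℝ → ℝ}
    (hF : ∀ t ∈ Ioo τ1 τ2, Good R (F t)) (hF' : Good R (F' t0))
    (hd : ∀ t ∈ Ioo τ1 τ2, ∀ r ∈ Ioo 0 R, HasDerivAt (fun t => F t r) (F' t r) t)
    {M : ℝ} (hM : ∀ t ∈ Ioo τ1 τ2, ∀ r ∈ Ioo 0 R, |F' t r| ≤ M) :
    HasDerivAt (fun t => ∫ r in (0:ℝ)..R, F t r) (∫ r in (0:ℝ)..R, F' t0 r) t0 := by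
  have hae : ∀ᵐ r : ℝ, r ∈ Set.uIoc 0 R → r ∈ Ioo 0 R := by
    have : ∀ᵐ r : ℝ, r ≠ R := by
      simp [MeasureTheory.ae_iff]
    filter_upwards [this] with r hr hr2
    rw [uIoc_of_le hR.le] at hr2
    exact ⟨hr2.1, lt_of_le_of_ne hr2.2 hr⟩
  refine (intervalIntegral.hasDerivAt_integral_of_dominated_loc_of_deriv_le
    (bound := fun _ => M) (s := Ioo τ1 τ2) (isOpen_Ioo.mem_nhds ht0) ?_ ((hF t0 ht0).ii hR) ?_ ?_ ?_ ?_).2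
  · filter_upwards [isOpen_Ioo.mem_nhds ht0] with t ht
    exact (intervalIntegrable_iff.1 ((hF t ht).ii hR)).aestronglyMeasurable
  · exact (intervalIntegrable_iff.1 (hF'.ii hR)).aestronglyMeasurable
  · filter_upwards [hae] with r hr h2 t ht
    simpa using hM t ht r (hr h2)
  · exact intervalIntegrable_const
  · filter_upwards [hae] with r hr h2 t ht
    exact hd t ht r (hr h2)

theorem wt_le_one {r0 α r : ℝ} (hα : 0 ≤ α) : wt r0 α r ≤ 1 := by
  unfold wt
  rw [Real.exp_le_one_iff]
  nlinarith [mul_nonneg hα (sq_nonneg (r - r0))]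

theorem wt_deriv_t {r0 T t r : ℝ} (h : t < T) :
    HasDerivAt (fun t => wt r0 (1 / (2 * (T - t))) r)
      (-((1 / (2 * (T - t))) * (r - r0)) ^ 2 * wt r0 (1 / (2 * (T - t))) r) t := by
  have hs : 0 < T - t := by linarith
  have h1 : HasDerivAt (fun t => 2 * (T - t)) (2 * (-1)) t :=
    ((hasDerivAt_id t).const_sub T).const_mul 2
  have h2 := (hasDerivAt_const t (1:ℝ)).div h1 (by positivity)
  have h3 : HasDerivAt (fun t => Real.exp (-(1 / (2 * (T - t)) / 2) * (r - r0) ^ 2)) _ t :=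
    (((h2.div_const 2).neg.mul_const ((r - r0) ^ 2))).exp
  refine (h3.congr_deriv ?_)
  change Real.exp (-(1 / (2 * (T - t)) / 2) * (r - r0) ^ 2) * _ =
    _ * Real.exp (-(1 / (2 * (T - t)) / 2) * (r - r0) ^ 2)
  rw [mul_comm]
  congr 1
  field_simp
  ring

noncomputable def Hf (R r0 T : ℝ) (u : ℝ → ℝ → ℝ) (t : ℝ) : ℝ :=
  ∫ r in (0:ℝ)..R, u r t ^ 2 * wt r0 (1 / (2 * (T - t))) r

noncomputable def Df (R c r0 T : ℝ) (u ur : ℝ → ℝ → ℝ) (t : ℝ) : ℝ :=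
  ∫ r in (0:ℝ)..R, (ur r t ^ 2 + c * (u r t / r) ^ 2) * wt r0 (1 / (2 * (T - t))) r

theorem sol_main {R c C K τ1 τ2 r0 T t : ℝ} {u ur urr ut urt : ℝ → ℝ → ℝ}
    (S : Sol R c C K τ1 τ2 u ur urr ut urt) (hr0 : r0 ∈ Icc 0 R) (ht : t ∈ Ioo τ1 τ2)
    (hT : t < T) :
    ∃ H' D', HasDerivAt (Hf R r0 T u) H' t ∧ HasDerivAt (Df R c r0 T u ur) D' t ∧
      0 ≤ Hf R r0 T u t ∧ 0 ≤ Df R c r0 T u ur t ∧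
      -(2 + 4 * C ^ 2) * Df R c r0 T u ur t - (1 + 1 / (2 * (T - t))) * Hf R r0 T u t ≤ H' ∧
      H' ≤ (1 + 2 * C ^ 2) * Hf R r0 T u t ∧
      (0 < Hf R r0 T u t → (D' - 2 * (1 / (2 * (T - t))) * Df R c r0 T u ur t) * Hf R r0 T u t
        - Df R c r0 T u ur t * H' ≤ 2 * C ^ 2 * Df R c r0 T u ur t * Hf R r0 T u t) := by
  have hR := S.hR
  have hc0 : 0 ≤ c := by linarith [S.hc]
  have hs : 0 < T - t := by linarith
  set τ3 := min τ2 ((T + t) / 2) with hτ3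
  have hsub : ∀ x ∈ Ioo τ1 τ3, x ∈ Ioo τ1 τ2 ∧ x < T ∧ 1 / (2 * (T - x)) ≤ 1 / (T - t) := by
    intro x hx
    have h1 := hx.2.trans_le (min_le_left _ _)
    have h2 := hx.2.trans_le (min_le_right _ _)
    refine ⟨⟨hx.1, h1⟩, by linarith, ?_⟩
    apply one_div_le_one_div_of_le hs
    linarith
  have ht3 : t ∈ Ioo τ1 τ3 := ⟨ht.1, lt_min ht.2 (by linarith)⟩
  have hK : 0 ≤ K := by
    have := (abs_nonneg _).trans (S.b2 t ht R ⟨hR.le, le_rfl⟩)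
    by_contra h
    push Not at h
    nlinarith
  -- elementary Good facts
  have gu : ∀ t ∈ Ioo τ1 τ2, Good R (fun r => u r t) := fun t ht => .of_cont (S.h0 t ht)
  have gur : ∀ t ∈ Ioo τ1 τ2, Good R (fun r => ur r t) := fun t ht => .of_cont (S.h1 t ht)
  have gut : ∀ t ∈ Ioo τ1 τ2, Good R (fun r => ut r t) := fun t ht => .of_cont (S.k0 t ht)
  have gurt : ∀ t ∈ Ioo τ1 τ2, Good R (fun r => urt r t) := fun t ht =>
    ⟨S.k1 t ht, K, S.b3 t ht⟩
  have B0 : ∀ t ∈ Ioo τ1 τ2, ∀ r ∈ Ioo 0 R, |u r t| ≤ K * (R * √R) := fun t ht r hr => by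
    refine (S.b0 t ht r (Ioo_subset_Icc_self hr)).trans ?_
    have := hr.1; have := hr.2.le
    gcongr
  have B0r : ∀ t ∈ Ioo τ1 τ2, ∀ r ∈ Ioo 0 R, |u r t / r| ≤ K * √R := fun t ht r hr => by
    have := hr.1
    rw [abs_div, abs_of_pos this, div_le_iff₀ this]
    refine (S.b0 t ht r (Ioo_subset_Icc_self hr)).trans ?_
    have := hr.2.le
    rw [mul_assoc, mul_comm √R]
    gcongr
  have B1 : ∀ t ∈ Ioo τ1 τ2, ∀ r ∈ Ioo 0 R, |ur r t| ≤ K * √R := fun t ht r hr => by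
    refine (S.b1 t ht r (Ioo_subset_Icc_self hr)).trans ?_
    have := hr.1; have := hr.2.le
    gcongr
  have B2 : ∀ t ∈ Ioo τ1 τ2, ∀ r ∈ Ioo 0 R, |ut r t| ≤ K * R := fun t ht r hr => by
    refine (S.b2 t ht r (Ioo_subset_Icc_self hr)).trans ?_
    have := hr.1; have := hr.2.le
    gcongr
  have B2r : ∀ t ∈ Ioo τ1 τ2, ∀ r ∈ Ioo 0 R, |ut r t / r| ≤ K := fun t ht r hr => by
    have := hr.1
    rw [abs_div, abs_of_pos this, div_le_iff₀ this]
    exact (S.b2 t ht r (Ioo_subset_Icc_self hr))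
  have gu' : ∀ t ∈ Ioo τ1 τ2, Good R (fun r => u r t / r) := fun t ht =>
    ⟨((S.h0 t ht).mono Ioo_subset_Icc_self).div (by fun_prop) (fun r hr => hr.1.ne'), _, B0r t ht⟩
  have gut' : ∀ t ∈ Ioo τ1 τ2, Good R (fun r => ut r t / r) := fun t ht =>
    ⟨((S.k0 t ht).mono Ioo_subset_Icc_self).div (by fun_prop) (fun r hr => hr.1.ne'), _, B2r t ht⟩
  have gW : ∀ t, Good R (wt r0 (1 / (2 * (T - t)))) := fun t => .of_cont (wt_cont _ _).continuousOn
  have gY : ∀ t, Good R (fun r => (1 / (2 * (T - t))) * (r - r0)) := fun t => .of_cont (by fun_prop)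
  have Yb : ∀ x ∈ Ioo τ1 τ3, ∀ r ∈ Ioo 0 R,
      |(1 / (2 * (T - x))) * (r - r0)| ≤ 1 / (T - t) * R := by
    intro x hx r hr
    obtain ⟨h1, h2, h3⟩ := hsub x hx
    have h4 : 0 < T - x := by linarith
    rw [abs_mul, abs_of_pos (by positivity)]
    have : |r - r0| ≤ R := by
      rw [abs_le]; constructor <;> linarith [hr.1, hr.2, hr0.1, hr0.2]
    gcongr
  have Wb : ∀ x ∈ Ioo τ1 τ3, ∀ r, |wt r0 (1 / (2 * (T - x))) r| ≤ 1 := by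
    intro x hx r
    obtain ⟨h1, h2, h3⟩ := hsub x hx
    have h4 : 0 < T - x := by linarith
    rw [abs_of_pos (wt_pos _ _ _)]
    exact wt_le_one (by positivity)
  have dH : HasDerivAt (Hf R r0 T u) (∫ r in (0:ℝ)..R, (2 * u r t * ut r t
      - u r t ^ 2 * ((1 / (2 * (T - t))) * (r - r0)) ^ 2) * wt r0 (1 / (2 * (T - t))) r) t := by
    refine deriv_under hR ht3 (F := fun t r => u r t ^ 2 * wt r0 (1 / (2 * (T - t))) r)
      (F' := fun t r => (2 * u r t * ut r t
      - u r t ^ 2 * ((1 / (2 * (T - t))) * (r - r0)) ^ 2) * wt r0 (1 / (2 * (T - t))) r)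
      (M := (2 * (K * (R * √R)) * (K * R) + (K * (R * √R)) ^ 2 * (1 / (T - t) * R) ^ 2) * 1)
      ?_ ?_ ?_ ?_
    · exact fun x hx => (gu x (hsub x hx).1).sq.mul (gW x)
    · exact ((((Good.const 2).mul (gu t ht)).mul (gut t ht)).sub
        ((gu t ht).sq.mul (gY t).sq)).mul (gW t)
    · intro x hx r hr
      obtain ⟨h1, h2, h3⟩ := hsub x hx
      refine (((S.t0 x h1 r hr).pow 2).mul (wt_deriv_t (r0 := r0) (r := r) h2)).congr_deriv ?_
      simp only [Pi.pow_apply]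
      norm_num
      ring
    · intro x hx r hr
      obtain ⟨h1, h2, h3⟩ := hsub x hx
      have b1 := B0 x h1 r hr
      have b2 := B2 x h1 r hr
      have b3 := Yb x hx r hr
      have b4 := Wb x hx r
      rw [abs_mul]
      have : |2 * u r x * ut r x - u r x ^ 2 * (1 / (2 * (T - x)) * (r - r0)) ^ 2| ≤
          2 * |u r x| * |ut r x| + |u r x| ^ 2 * |1 / (2 * (T - x)) * (r - r0)| ^ 2 := by
        refine (abs_sub _ _).trans (le_of_eq ?_)
        simp only [abs_mul, abs_pow, abs_two]
      refine mul_le_mul (this.trans ?_) b4 (abs_nonneg _) (by positivity)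
      gcongr
  have dD : HasDerivAt (Df R c r0 T u ur) (∫ r in (0:ℝ)..R, (2 * ur r t * urt r t
      + 2 * c * (u r t / r) * (ut r t / r)
      - (ur r t ^ 2 + c * (u r t / r) ^ 2) * ((1 / (2 * (T - t))) * (r - r0)) ^ 2)
        * wt r0 (1 / (2 * (T - t))) r) t := by
    refine deriv_under hR ht3
      (F := fun t r => (ur r t ^ 2 + c * (u r t / r) ^ 2) * wt r0 (1 / (2 * (T - t))) r)
      (F' := fun t r => (2 * ur r t * urt r t
      + 2 * c * (u r t / r) * (ut r t / r)
      - (ur r t ^ 2 + c * (u r t / r) ^ 2) * ((1 / (2 * (T - t))) * (r - r0)) ^ 2)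
        * wt r0 (1 / (2 * (T - t))) r)
      (M := (2 * (K * √R) * K + 2 * c * (K * √R) * K
        + ((K * √R) ^ 2 + c * (K * √R) ^ 2) * (1 / (T - t) * R) ^ 2) * 1)
      ?_ ?_ ?_ ?_
    · exact fun x hx => ((gur x (hsub x hx).1).sq.add
        ((Good.const c).mul (gu' x (hsub x hx).1).sq)).mul (gW x)
    · exact (((((Good.const 2).mul (gur t ht)).mul (gurt t ht)).add
        (((Good.const (2 * c)).mul (gu' t ht)).mul (gut' t ht))).sub
        (((gur t ht).sq.add ((Good.const c).mul (gu' t ht).sq)).mul (gY t).sq)).mul (gW t)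
    · intro x hx r hr
      obtain ⟨h1, h2, h3⟩ := hsub x hx
      refine ((((S.t1 x h1 r hr).pow 2).add ((((S.t0 x h1 r hr).div_const r).pow 2).const_mul c)).mul
        (wt_deriv_t (r0 := r0) (r := r) h2)).congr_deriv ?_
      simp only [Pi.pow_apply, Pi.add_apply]
      norm_num
      ring
    · intro x hx r hr
      obtain ⟨h1, h2, h3⟩ := hsub x hx
      have b1 := B1 x h1 r hr
      have b2 := S.b3 x h1 r hr
      have b3 := Yb x hx r hr
      have b4 := Wb x hx r
      have b5 := B0r x h1 r hr
      have b6 := B2r x h1 r hr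
      rw [abs_mul]
      have : |2 * ur r x * urt r x + 2 * c * (u r x / r) * (ut r x / r)
          - (ur r x ^ 2 + c * (u r x / r) ^ 2) * (1 / (2 * (T - x)) * (r - r0)) ^ 2| ≤
          2 * |ur r x| * |urt r x| + 2 * c * |u r x / r| * |ut r x / r|
          + (|ur r x| ^ 2 + c * |u r x / r| ^ 2) * |1 / (2 * (T - x)) * (r - r0)| ^ 2 := by
        refine (abs_sub _ _).trans (add_le_add ((abs_add_le _ _).trans ?_) ?_)
        · rw [abs_mul, abs_mul, abs_mul, abs_mul, abs_mul, abs_two, abs_of_nonneg hc0]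
        · rw [abs_mul, abs_pow, abs_of_nonneg (a := ur r x ^ 2 + c * (u r x / r) ^ 2)
            (by positivity), sq_abs, sq_abs, sq_abs]
      refine mul_le_mul (this.trans ?_) b4 (abs_nonneg _) (by positivity)
      gcongr
  have ft := fixed_time hR S.hc hr0 (α := 1 / (2 * (T - t))) (by positivity) (S.h0 t ht) (S.h1 t ht)
    (S.h2 t ht) (S.k0 t ht) (gurt t ht) (S.d0 t ht) (S.d1 t ht) (S.e0 t ht) (S.b0 t ht) (S.b1 t ht)
    (S.b2 t ht) (S.uR t ht) (S.utR t ht) (S.pde t ht) (H := Hf R r0 T u t)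
    (D := Df R c r0 T u ur t) rfl rfl rfl rfl
  refine ⟨_, _, dH, dD, ?_, ?_, ft⟩
  · refine intervalIntegral.integral_nonneg hR.le (fun r _ => ?_)
    have := wt_pos r0 (1 / (2 * (T - t))) r
    positivity
  · refine intervalIntegral.integral_nonneg hR.le (fun r _ => ?_)
    have := wt_pos r0 (1 / (2 * (T - t))) r
    positivity


theorem ode_step {C p q T : ℝ} (hpq : p ≤ q) (hT : q < T) {H D : ℝ → ℝ}
    (h : ∀ t ∈ Icc p q, ∃ H' D', HasDerivAt H H' t ∧ HasDerivAt D D' t ∧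
      0 ≤ H t ∧ 0 ≤ D t ∧
      -(2 + 4 * C ^ 2) * D t - (1 + 1 / (2 * (T - t))) * H t ≤ H' ∧
      H' ≤ (1 + 2 * C ^ 2) * H t ∧
      (0 < H t → (D' - 2 * (1 / (2 * (T - t))) * D t) * H t
        - D t * H' ≤ 2 * C ^ 2 * D t * H t))
    (hpos : ∀ t ∈ Ico p q, 0 < H t) (M : ℕ)
    (hM : (2 + 4 * C ^ 2) * ((T - p) * D p / H p * Real.exp (2 * C ^ 2 * (q - p))) + 1 / 2 ≤ M) :
    H p * (1 / (T - p)) ^ (M + 1) * Real.exp p ≤ H q * (1 / (T - q)) ^ (M + 1) * Real.exp q := by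
  choose! H' D' h using h
  rcases eq_or_lt_of_le hpq with rfl | hpq'
  · exact le_rfl
  have hN : AntitoneOn (fun t => (T - t) * D t / H t * Real.exp (-(2 * C ^ 2 * t))) (Ico p q) := by
    have hd : ∀ t ∈ Ico p q, HasDerivAt
        (fun t => (T - t) * D t / H t * Real.exp (-(2 * C ^ 2 * t)))
        ((((-1) * D t + (T - t) * D' t) * H t - (T - t) * D t * H' t) / H t ^ 2
          * Real.exp (-(2 * C ^ 2 * t)) + (T - t) * D t / H t *
          (Real.exp (-(2 * C ^ 2 * t)) * -(2 * C ^ 2 * 1))) t := by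
      intro t ht
      obtain ⟨a1, a2, -⟩ := h t (Ico_subset_Icc_self ht)
      exact ((((hasDerivAt_id t).const_sub T).mul a2).div a1 (hpos t ht).ne').mul
        ((((hasDerivAt_id t).const_mul (2 * C ^ 2)).neg).exp)
    refine antitoneOn_of_deriv_nonpos (convex_Ico p q)
      (fun t ht => (hd t ht).continuousAt.continuousWithinAt)
      (fun t ht => (hd t (interior_subset ht)).differentiableAt.differentiableWithinAt) ?_
    intro t ht
    have ht := interior_subset ht
    rw [(hd t ht).deriv]
    obtain ⟨-, -, a3, a4, -, -, a5⟩ := h t (Ico_subset_Icc_self ht)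
    have hp := hpos t ht
    have hs : 0 < T - t := by linarith [ht.2]
    have a6 := a5 hp
    have e : (((-1) * D t + (T - t) * D' t) * H t - (T - t) * D t * H' t) / H t ^ 2
          * Real.exp (-(2 * C ^ 2 * t)) + (T - t) * D t / H t *
          (Real.exp (-(2 * C ^ 2 * t)) * -(2 * C ^ 2 * 1)) =
        ((D' t - 2 * (1 / (2 * (T - t))) * D t) * H t
        - D t * H' t - 2 * C ^ 2 * D t * H t) * ((T - t) / H t ^ 2 * Real.exp (-(2 * C ^ 2 * t))) := by
      field_simp
      ring
    rw [e]
    exact mul_nonpos_of_nonpos_of_nonneg (by linarith) (by positivity)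
  have hE : MonotoneOn (fun t => H t * (1 / (T - t)) ^ (M + 1) * Real.exp t) (Icc p q) := by
    have hd : ∀ t ∈ Icc p q, HasDerivAt (fun t => H t * (1 / (T - t)) ^ (M + 1) * Real.exp t)
        ((H' t * (1 / (T - t)) ^ (M + 1) + H t * (((M + 1 : ℕ) : ℝ) * (1 / (T - t)) ^ (M + 1 - 1)
          * ((0 * (T - t) - 1 * (-1)) / (T - t) ^ 2))) * Real.exp t
          + H t * (1 / (T - t)) ^ (M + 1) * Real.exp t) t := by
      intro t ht
      obtain ⟨a1, -⟩ := h t ht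
      have hs : 0 < T - t := by linarith [ht.2]
      exact (a1.mul (((hasDerivAt_const t (1:ℝ)).div ((hasDerivAt_id t).const_sub T) hs.ne').pow
        (M + 1))).mul (Real.hasDerivAt_exp t)
    refine monotoneOn_of_deriv_nonneg (convex_Icc p q)
      (fun t ht => (hd t ht).continuousAt.continuousWithinAt)
      (fun t ht => (hd t (interior_subset ht)).differentiableAt.differentiableWithinAt) ?_
    intro t ht
    rw [interior_Icc] at ht
    rw [(hd t (Ioo_subset_Icc_self ht)).deriv]
    have ht2 : t ∈ Ico p q := Ioo_subset_Ico_self ht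
    obtain ⟨-, -, a3, a4, a5, -, -⟩ := h t (Ioo_subset_Icc_self ht)
    have hp := hpos t ht2
    have hs : 0 < T - t := by linarith [ht.2]
    have n1 := hN ⟨le_rfl, hpq'⟩ ht2 ht.1.le
    simp only at n1
    have hDp : 0 ≤ D p := (h p ⟨le_rfl, hpq⟩).2.2.2.1
    have hHp : 0 < H p := hpos p ⟨le_rfl, hpq'⟩
    have hsp : 0 < T - p := by linarith
    have n2 : (T - t) * D t / H t ≤ (T - p) * D p / H p * Real.exp (2 * C ^ 2 * (q - p)) := by
      have e1 : (T - t) * D t / H t = (T - t) * D t / H t * Real.exp (-(2 * C ^ 2 * t))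
          * Real.exp (2 * C ^ 2 * t) := by
        rw [mul_assoc, ← Real.exp_add]; simp
      rw [e1]
      refine (mul_le_mul_of_nonneg_right n1 (Real.exp_pos _).le).trans ?_
      rw [mul_assoc, ← Real.exp_add]
      refine mul_le_mul_of_nonneg_left (Real.exp_le_exp.2 ?_) (by positivity)
      nlinarith [sq_nonneg C, ht.2]
    have n3 : (2 + 4 * C ^ 2) * ((T - t) * D t / H t) + 1 / 2 ≤ M + 1 := by
      have := mul_le_mul_of_nonneg_left n2 (by positivity : 0 ≤ 2 + 4 * C ^ 2)
      linarith
    have n4 : (2 + 4 * C ^ 2) * D t + 1 / (2 * (T - t)) * H t ≤ (M + 1) * (H t / (T - t)) := by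
      have := mul_le_mul_of_nonneg_right n3 (by positivity : 0 ≤ H t / (T - t))
      refine le_trans (le_of_eq ?_) this
      field_simp
    have e : (H' t * (1 / (T - t)) ^ (M + 1) + H t * (((M + 1 : ℕ) : ℝ) * (1 / (T - t)) ^ (M + 1 - 1)
          * ((0 * (T - t) - 1 * (-1)) / (T - t) ^ 2))) * Real.exp t
          + H t * (1 / (T - t)) ^ (M + 1) * Real.exp t =
        (H' t + H t + (M + 1) * (H t / (T - t))) * ((1 / (T - t)) ^ (M + 1) * Real.exp t) := by
      rw [Nat.add_sub_cancel, pow_succ]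
      push_cast
      field_simp
      ring
    rw [e]
    refine mul_nonneg ?_ (by positivity)
    linarith
  exact hE ⟨le_rfl, hpq⟩ ⟨hpq, le_rfl⟩ hpq

theorem ode_main {C p q T : ℝ} (hpq : p ≤ q) (hT : q < T) {H D : ℝ → ℝ}
    (h : ∀ t ∈ Icc p q, ∃ H' D', HasDerivAt H H' t ∧ HasDerivAt D D' t ∧
      0 ≤ H t ∧ 0 ≤ D t ∧
      -(2 + 4 * C ^ 2) * D t - (1 + 1 / (2 * (T - t))) * H t ≤ H' ∧
      H' ≤ (1 + 2 * C ^ 2) * H t ∧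
      (0 < H t → (D' - 2 * (1 / (2 * (T - t))) * D t) * H t
        - D t * H' ≤ 2 * C ^ 2 * D t * H t))
    (hpos : 0 < H p) (M : ℕ)
    (hM : (2 + 4 * C ^ 2) * ((T - p) * D p / H p * Real.exp (2 * C ^ 2 * (q - p))) + 1 / 2 ≤ M) :
    H p * (1 / (T - p)) ^ (M + 1) * Real.exp p ≤ H q * (1 / (T - q)) ^ (M + 1) * Real.exp q := by
  have hDp : 0 ≤ D p := by
    obtain ⟨_, _, _, _, _, h, _⟩ := h p ⟨le_rfl, hpq⟩
    exact h
  have hcont : ContinuousOn H (Icc p q) := fun t ht => by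
    obtain ⟨_, _, h1, _⟩ := h t ht
    exact h1.continuousAt.continuousWithinAt
  refine ode_step hpq hT h ?_ M hM
  by_contra hcon
  push Not at hcon
  obtain ⟨t1, ht1, hHt1⟩ := hcon
  have hcomp : IsCompact (Icc p q ∩ H ⁻¹' Iic 0) :=
    isCompact_Icc.of_isClosed_subset (hcont.preimage_isClosed_of_isClosed isClosed_Icc isClosed_Iic)
      inter_subset_left
  obtain ⟨τ, ⟨hτ, hHτ⟩, hmin⟩ := hcomp.exists_isLeast ⟨t1, Ico_subset_Icc_self ht1, hHt1⟩
  have hsub : Icc p τ ⊆ Icc p q := Icc_subset_Icc_right hτ.2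
  have hTp : 0 < T - p := by linarith
  have hTτ : 0 < T - τ := by linarith [hτ.2]
  have := ode_step hτ.1 (lt_of_le_of_lt hτ.2 hT) (fun t ht => h t (hsub ht)) (M := M) ?_ ?_
  · have h1 : 0 < H p * (1 / (T - p)) ^ (M + 1) * Real.exp p := by positivity
    have h2 : H τ * (1 / (T - τ)) ^ (M + 1) * Real.exp τ ≤ 0 := by
      rw [mul_assoc]
      exact mul_nonpos_of_nonpos_of_nonneg hHτ (by positivity)
    linarith
  · intro t ht
    by_contra hc
    push Not at hc
    have := hmin ⟨hsub (Ico_subset_Icc_self ht), hc⟩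
    linarith [ht.2]
  · refine le_trans ?_ hM
    have := hτ.2
    gcongr

theorem Hf_zero {R r0 T t : ℝ} {u : ℝ → ℝ → ℝ} (hR : 0 < R)
    (hc : ContinuousOn (fun r => u r t) (Icc 0 R)) (h : Hf R r0 T u t ≤ 0) :
    ∀ r ∈ Icc 0 R, u r t = 0 := by
  intro r hr
  by_contra hne
  refine absurd h (not_le.2 (intervalIntegral.integral_pos hR
    ((hc.pow 2).mul (wt_cont _ _).continuousOn) ?_ ⟨r, hr, ?_⟩))
  · intro x _
    have := wt_pos r0 (1 / (2 * (T - t))) x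
    positivity
  · have := wt_pos r0 (1 / (2 * (T - t))) r
    positivity

theorem fu_abs {R c C K τ1 τ2 p q : ℝ} {u ur urr ut urt : ℝ → ℝ → ℝ}
    (S : Sol R c C K τ1 τ2 u ur urr ut urt) (hp : p ∈ Ioo τ1 τ2) (hq : q ∈ Ioo τ1 τ2) (hpq : p ≤ q)
    (hz : ∀ r ∈ Icc 0 R, u r p = 0) : ∀ r ∈ Icc 0 R, u r q = 0 := by
  have hR := S.hR
  have h0 : (0:ℝ) ∈ Icc 0 R := ⟨le_rfl, hR.le⟩
  refine Hf_zero (r0 := 0) (T := q + 1) hR (S.h0 q hq) ?_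
  have hin : ∀ t ∈ Icc p q, t ∈ Ioo τ1 τ2 := fun t ht =>
    ⟨lt_of_lt_of_le hp.1 ht.1, lt_of_le_of_lt ht.2 hq.2⟩
  have h : ∀ t ∈ Icc p q, ∃ H', HasDerivAt (Hf R 0 (q + 1) u) H' t ∧
      H' ≤ (1 + 2 * C ^ 2) * Hf R 0 (q + 1) u t := by
    intro t ht
    obtain ⟨H', _, h1, _, _, _, _, h2, _⟩ := sol_main (T := q + 1) S h0 (hin t ht) (by linarith [ht.2])
    exact ⟨H', h1, h2⟩
  choose! H' h using h
  have hd : ∀ t ∈ Icc p q, HasDerivAt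
      (fun t => Hf R 0 (q + 1) u t * Real.exp (-((1 + 2 * C ^ 2) * t)))
      (H' t * Real.exp (-((1 + 2 * C ^ 2) * t)) + Hf R 0 (q + 1) u t *
        (Real.exp (-((1 + 2 * C ^ 2) * t)) * -((1 + 2 * C ^ 2) * 1))) t := fun t ht =>
    (h t ht).1.mul ((((hasDerivAt_id t).const_mul (1 + 2 * C ^ 2)).neg).exp)
  have hN : AntitoneOn (fun t => Hf R 0 (q + 1) u t * Real.exp (-((1 + 2 * C ^ 2) * t)))
      (Icc p q) := by
    refine antitoneOn_of_deriv_nonpos (convex_Icc p q)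
      (fun t ht => (hd t ht).continuousAt.continuousWithinAt)
      (fun t ht => (hd t (interior_subset ht)).differentiableAt.differentiableWithinAt) ?_
    intro t ht
    have ht := interior_subset ht
    rw [(hd t ht).deriv]
    have := (h t ht).2
    have e := Real.exp_pos (-((1 + 2 * C ^ 2) * t))
    nlinarith
  have h1 := hN ⟨le_rfl, hpq⟩ ⟨hpq, le_rfl⟩ hpq
  have h2 : Hf R 0 (q + 1) u p = 0 := by
    unfold Hf
    rw [Good.int_congr hR (g := fun _ => 0)]
    · simp
    · intro r hr
      rw [hz r (Ioo_subset_Icc_self hr)]; ring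
  simp only [h2, zero_mul] at h1
  have e := Real.exp_pos (-((1 + 2 * C ^ 2) * q))
  by_contra hc
  push Not at hc
  nlinarith [mul_pos hc e]

theorem bu_abs {R c C K τ1 τ2 r0 p q : ℝ} {u ur urr ut urt : ℝ → ℝ → ℝ}
    (S : Sol R c C K τ1 τ2 u ur urr ut urt) (hp : p ∈ Ioo τ1 τ2) (hq : q ∈ Ioo τ1 τ2) (hpq : p < q)
    (hr0 : r0 ∈ Icc 0 R)
    (hz : ∀ k : ℕ, ∃ B, ∀ r ∈ Icc 0 R, |u r q| ≤ B * |r - r0| ^ k) :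
    ∀ r ∈ Icc 0 R, u r p = 0 := by
  have hR := S.hR
  have hc0 : 0 ≤ c := by linarith [S.hc]
  set δ := q - p with hδ
  have hδ0 : 0 < δ := by linarith
  have hin : ∀ t ∈ Icc p q, t ∈ Ioo τ1 τ2 := fun t ht =>
    ⟨lt_of_lt_of_le hp.1 ht.1, lt_of_le_of_lt ht.2 hq.2⟩
  set h0 := Hf R r0 (q) u p with hh0
  by_contra hne
  have hh0pos : 0 < h0 := by
    by_contra hc
    push Not at hc
    exact hne (Hf_zero hR (S.h0 p hp) hc)
  have gu : Good R (fun r => u r p) := .of_cont (S.h0 p hp)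
  have gur : Good R (fun r => ur r p) := .of_cont (S.h1 p hp)
  have gu' : Good R (fun r => u r p / r) := by
    refine ⟨((S.h0 p hp).mono Ioo_subset_Icc_self).div (by fun_prop) (fun r hr => hr.1.ne'),
      |K| * √R, ?_⟩
    intro r hr
    have := hr.1
    rw [abs_div, abs_of_pos this, div_le_iff₀ this]
    refine (S.b0 p hp r (Ioo_subset_Icc_self hr)).trans ?_
    have := hr.2.le
    rw [mul_assoc, mul_comm √R]
    have := le_abs_self K
    gcongr
  have gW : ∀ α, Good R (wt r0 α) := fun α => .of_cont (wt_cont _ _).continuousOn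
  set D0 := ∫ r in (0:ℝ)..R, (ur r p ^ 2 + c * (u r p / r) ^ 2) with hD0
  have hD0nn : 0 ≤ D0 := intervalIntegral.integral_nonneg hR.le (fun r _ => by positivity)
  obtain ⟨M, hM⟩ := exists_nat_ge ((2 + 4 * C ^ 2) * ((δ + 1) * D0 / h0
    * Real.exp (2 * C ^ 2 * (q - p))) + 1 / 2)
  have low : ∀ a ∈ Ioc (0:ℝ) 1, h0 * (1 / (δ + 1)) ^ (M + 1) * Real.exp p ≤
      Hf R r0 (q + a) u q * (1 / a) ^ (M + 1) * Real.exp q := by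
    intro a ha
    have ha0 := ha.1
    have e1 : q + a - p = δ + a := by rw [hδ]; ring
    have hHa : h0 ≤ Hf R r0 (q + a) u p := by
      refine Good.mono hR (gu.sq.mul (gW _)) (gu.sq.mul (gW _)) (fun r _ => ?_)
      refine mul_le_mul_of_nonneg_left ?_ (sq_nonneg _)
      unfold wt
      refine Real.exp_le_exp.2 ?_
      rw [neg_mul, neg_mul, neg_le_neg_iff, e1]
      refine mul_le_mul_of_nonneg_right ?_ (sq_nonneg _)
      refine div_le_div_of_nonneg_right ?_ (by norm_num)
      refine one_div_le_one_div_of_le (by positivity) ?_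
      linarith
    have hDa : Df R c r0 (q + a) u ur p ≤ D0 := by
      refine Good.mono hR ((gur.sq.add ((Good.const c).mul gu'.sq)).mul (gW _))
        (gur.sq.add ((Good.const c).mul gu'.sq)) (fun r _ => ?_)
      refine mul_le_of_le_one_right (by positivity) (wt_le_one ?_)
      rw [e1]; positivity
    have hDa0 : 0 ≤ Df R c r0 (q + a) u ur p := by
      obtain ⟨_, _, _, _, _, h, _⟩ := sol_main (T := q + a) S hr0 hp (by linarith)
      exact h
    have := ode_main (C := C) hpq.le (T := q + a) (by linarith) (H := Hf R r0 (q + a) u)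
      (D := Df R c r0 (q + a) u ur)
      (fun t ht => sol_main S hr0 (hin t ht) (by linarith [ht.2])) (hh0pos.trans_le hHa) M ?_
    · rw [e1, add_sub_cancel_left] at this
      refine le_trans ?_ this
      have := ha.2
      have hHa0 : 0 ≤ Hf R r0 (q + a) u p := hh0pos.le.trans hHa
      gcongr
    · refine le_trans ?_ hM
      rw [e1]
      have := ha.2
      gcongr
  obtain ⟨B, hB⟩ := hz (M + 2)
  have up : ∀ a ∈ Ioc (0:ℝ) 1, Hf R r0 (q + a) u q ≤
      R * (B ^ 2 * ((4 * a) ^ (M + 2) * (M + 2).factorial)) := by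
    intro a ha
    have ha0 := ha.1
    have : ∫ r in (0:ℝ)..R, (B ^ 2 * ((4 * a) ^ (M + 2) * (M + 2).factorial)) =
        R * (B ^ 2 * ((4 * a) ^ (M + 2) * (M + 2).factorial)) := by
      rw [intervalIntegral.integral_const]; simp only [sub_zero, smul_eq_mul]
    rw [← this]
    refine Good.mono hR ((Good.of_cont (S.h0 q hq)).sq.mul (gW _)) (Good.const _) (fun r hr => ?_)
    have h1 := hB r (Ioo_subset_Icc_self hr)
    have h2 : u r q ^ 2 ≤ B ^ 2 * ((r - r0) ^ 2) ^ (M + 2) := by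
      rw [← sq_abs (u r q)]
      refine (pow_le_pow_left₀ (abs_nonneg _) h1 2).trans (le_of_eq ?_)
      rw [mul_pow, ← pow_mul, mul_comm (M + 2) 2, pow_mul, sq_abs]
    set x := (r - r0) ^ 2 / (4 * a) with hx
    have hx0 : 0 ≤ x := by positivity
    have h3 : wt r0 (1 / (2 * (q + a - q))) r = Real.exp (-x) := by
      unfold wt
      congr 1
      rw [add_sub_cancel_left, hx]
      field_simp
      ring
    have h4 : x ^ (M + 2) * Real.exp (-x) ≤ (M + 2).factorial := by
      have := Real.pow_div_factorial_le_exp x hx0 (M + 2)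
      rw [Real.exp_neg, ← div_eq_mul_inv, div_le_iff₀ (Real.exp_pos _)]
      rwa [div_le_iff₀ (by positivity), mul_comm] at this
    rw [h3]
    have h5 : (r - r0) ^ 2 = 4 * a * x := by rw [hx]; field_simp
    calc u r q ^ 2 * Real.exp (-x) ≤ B ^ 2 * ((r - r0) ^ 2) ^ (M + 2) * Real.exp (-x) :=
          mul_le_mul_of_nonneg_right h2 (Real.exp_pos _).le
      _ = B ^ 2 * ((4 * a) ^ (M + 2) * (x ^ (M + 2) * Real.exp (-x))) := by
          rw [h5, mul_pow]; ring
      _ ≤ _ := by gcongr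
  set c1 := h0 * (1 / (δ + 1)) ^ (M + 1) * Real.exp p with hc1
  have hc1pos : 0 < c1 := by positivity
  set c2 := R * (B ^ 2 * (4 ^ (M + 2) * (M + 2).factorial)) * Real.exp q with hc2
  have hc2nn : 0 ≤ c2 := by positivity
  have fin : ∀ a ∈ Ioc (0:ℝ) 1, c1 ≤ c2 * a := by
    intro a ha
    have ha0 := ha.1
    refine (low a ha).trans ?_
    calc Hf R r0 (q + a) u q * (1 / a) ^ (M + 1) * Real.exp q
        ≤ (R * (B ^ 2 * ((4 * a) ^ (M + 2) * (M + 2).factorial))) * (1 / a) ^ (M + 1)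
          * Real.exp q := by
          have := up a ha
          gcongr
      _ = c2 * a := by
          rw [hc2, mul_pow, pow_succ a (M + 1), one_div, inv_pow]
          field_simp
  have h1 := fin (min 1 (c1 / (2 * (c2 + 1)))) ⟨by positivity, min_le_left _ _⟩
  have h2 : c2 * min 1 (c1 / (2 * (c2 + 1))) ≤ c2 * (c1 / (2 * (c2 + 1))) :=
    mul_le_mul_of_nonneg_left (min_le_right _ _) hc2nn
  have h3 : c2 * (c1 / (2 * (c2 + 1))) < c1 := by
    rw [← mul_div_assoc, div_lt_iff₀ (by positivity)]
    nlinarith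
  linarith


def SM (R t1 t2 : ℝ) (f : ℝ → ℝ → ℝ) : Prop :=
  ContDiffOn ℝ (⊤ : ℕ∞) (fun p : ℝ × ℝ => f p.1 p.2) (Icc 0 R ×ˢ Ioo t1 t2)

theorem SM.contr {R t1 t2 : ℝ} {f : ℝ → ℝ → ℝ} (h : SM R t1 t2 f) {t : ℝ} (ht : t ∈ Ioo t1 t2) :
    ContDiffOn ℝ (⊤ : ℕ∞) (fun r => f r t) (Icc 0 R) := by
  have : ContDiffOn ℝ (⊤ : ℕ∞) (fun r : ℝ => (r, t)) (Icc 0 R) :=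
    (contDiff_id.prodMk contDiff_const).contDiffOn
  exact ContDiffOn.comp h this (fun r hr => ⟨hr, ht⟩)

theorem SM.cr {R t1 t2 : ℝ} {f : ℝ → ℝ → ℝ} (h : SM R t1 t2 f) {t : ℝ} (ht : t ∈ Ioo t1 t2) :
    ContinuousOn (fun r => f r t) (Icc 0 R) := (h.contr ht).continuousOn

theorem SM.bdd {R t1 t2 τ1 τ2 : ℝ} {f : ℝ → ℝ → ℝ} (h : SM R t1 t2 f)
    (h1 : t1 < τ1) (h2 : τ2 < t2) :
    ∃ K, 0 ≤ K ∧ ∀ r ∈ Icc 0 R, ∀ t ∈ Icc τ1 τ2, |f r t| ≤ K := by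
  have hc : IsCompact (Icc 0 R ×ˢ Icc τ1 τ2) := isCompact_Icc.prod isCompact_Icc
  have hcont : ContinuousOn (fun p : ℝ × ℝ => f p.1 p.2) (Icc 0 R ×ˢ Icc τ1 τ2) :=
    h.continuousOn.mono (prod_mono le_rfl (fun t ht => ⟨h1.trans_le ht.1, ht.2.trans_lt h2⟩))
  obtain ⟨K, hK⟩ := hc.exists_bound_of_continuousOn hcont
  exact ⟨max K 0, le_max_right _ _, fun r hr t ht => (hK (r, t) ⟨hr, ht⟩).trans (le_max_left _ _)⟩

theorem SM.deriv {R t1 t2 : ℝ} (hR : 0 < R) {f : ℝ → ℝ → ℝ} (h : SM R t1 t2 f) :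
    ∃ fr ft frt : ℝ → ℝ → ℝ, SM R t1 t2 fr ∧ SM R t1 t2 ft ∧ SM R t1 t2 frt ∧
      (∀ r ∈ Icc 0 R, ∀ t ∈ Ioo t1 t2, HasDerivWithinAt (fun r => f r t) (fr r t) (Icc 0 R) r) ∧
      (∀ r ∈ Icc 0 R, ∀ t ∈ Ioo t1 t2, HasDerivAt (fun t => f r t) (ft r t) t) ∧
      (∀ r ∈ Icc 0 R, ∀ t ∈ Ioo t1 t2, HasDerivWithinAt (fun r => ft r t) (frt r t) (Icc 0 R) r) ∧
      (∀ r ∈ Icc 0 R, ∀ t ∈ Ioo t1 t2, HasDerivAt (fun t => fr r t) (frt r t) t) := by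
  have hu : UniqueDiffOn ℝ (Icc 0 R ×ˢ Ioo t1 t2) :=
    (uniqueDiffOn_Icc hR).prod (uniqueDiffOn_Ioo _ _)
  set F : ℝ × ℝ → ℝ := fun p => f p.1 p.2 with hF
  set S := Icc 0 R ×ˢ Ioo t1 t2 with hS
  have key : ∀ (G : ℝ × ℝ → ℝ), ContDiffOn ℝ (⊤ : ℕ∞) G S →
      (∀ e : ℝ × ℝ, ContDiffOn ℝ (⊤ : ℕ∞) (fun p => fderivWithin ℝ G S p e) S) ∧
      (∀ r ∈ Icc 0 R, ∀ t ∈ Ioo t1 t2, HasDerivWithinAt (fun r => G (r, t))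
        (fderivWithin ℝ G S (r, t) (1, 0)) (Icc 0 R) r) ∧
      (∀ r ∈ Icc 0 R, ∀ t ∈ Ioo t1 t2, HasDerivAt (fun t => G (r, t))
        (fderivWithin ℝ G S (r, t) (0, 1)) t) := by
    intro G hG
    refine ⟨fun e => ?_, fun r hr t ht => ?_, fun r hr t ht => ?_⟩
    · exact (hG.fderivWithin hu (by simp)).clm_apply contDiffOn_const
    · have h1 : HasFDerivWithinAt G (fderivWithin ℝ G S (r, t)) S (r, t) :=
        ((hG.differentiableOn (by simp)) _ ⟨hr, ht⟩).hasFDerivWithinAt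
      have h2 : HasDerivWithinAt (fun r : ℝ => (r, t)) (1, 0) (Icc 0 R) r :=
        (hasDerivWithinAt_id r _).prodMk (hasDerivWithinAt_const r _ t)
      have hmaps : MapsTo (fun r : ℝ => (r, t)) (Icc 0 R) S := fun x hx => ⟨hx, ht⟩
      exact h1.comp_hasDerivWithinAt r h2 hmaps
    · have h1 : HasFDerivWithinAt G (fderivWithin ℝ G S (r, t)) S (r, t) :=
        ((hG.differentiableOn (by simp)) _ ⟨hr, ht⟩).hasFDerivWithinAt
      have h2 : HasDerivWithinAt (fun t : ℝ => (r, t)) (0, 1) (Ioo t1 t2) t :=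
        (hasDerivWithinAt_const t _ r).prodMk (hasDerivWithinAt_id t _)
      have hmaps : MapsTo (fun t : ℝ => (r, t)) (Ioo t1 t2) S := fun x hx => ⟨hr, hx⟩
      exact (h1.comp_hasDerivWithinAt t h2 hmaps).hasDerivAt (isOpen_Ioo.mem_nhds ht)
  obtain ⟨a1, a2, a3⟩ := key F h
  obtain ⟨b1, b2, b3⟩ := key _ (a1 (1, 0))
  obtain ⟨c1, c2, c3⟩ := key _ (a1 (0, 1))
  refine ⟨fun r t => fderivWithin ℝ F S (r, t) (1, 0), fun r t => fderivWithin ℝ F S (r, t) (0, 1),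
    fun r t => fderivWithin ℝ (fun p => fderivWithin ℝ F S p (0, 1)) S (r, t) (1, 0),
    a1 _, a1 _, c1 _, a2, a3, c2, ?_⟩
  intro r hr t ht
  refine (b3 r hr t ht).congr_deriv ?_
  have hmem : (r, t) ∈ S := ⟨hr, ht⟩
  have hint : (r, t) ∈ closure (interior S) := by
    rw [hS, interior_prod_eq, closure_prod_eq, interior_Icc, interior_Ioo, closure_Ioo hR.ne]
    exact ⟨hr, subset_closure ht⟩
  have hsym := ContDiffWithinAt.isSymmSndFDerivWithinAt (h _ hmem)
    (by simpa using WithTop.coe_le_coe.2 (le_top : (2 : ℕ∞) ≤ ⊤)) hu hint hmem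
  have hd : DifferentiableWithinAt ℝ (fderivWithin ℝ F S) S (r, t) :=
    (h.fderivWithin (m := (⊤ : ℕ∞)) hu (by simp)).differentiableOn (by simp) _ hmem
  have hx : ∀ e e' : ℝ × ℝ, fderivWithin ℝ (fun p => fderivWithin ℝ F S p e) S (r, t) e' =
      fderivWithin ℝ (fderivWithin ℝ F S) S (r, t) e' e := by
    intro e e'
    have := (hd.hasFDerivWithinAt.clm_apply (hasFDerivWithinAt_const e (r, t) S)).fderivWithin
      (hu _ hmem)
    rw [this]
    simp
  rw [hx]
  refine Eq.trans ?_ (hx _ _).symm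
  exact hsym _ _

theorem lip0 {R K : ℝ} {f f' : ℝ → ℝ}
    (hd : ∀ r ∈ Icc 0 R, HasDerivWithinAt f (f' r) (Icc 0 R) r)
    (hK : ∀ r ∈ Icc 0 R, |f' r| ≤ K) {x y : ℝ} (hx : x ∈ Icc 0 R) (hy : y ∈ Icc 0 R) :
    |f y - f x| ≤ K * |y - x| := by
  have := (convex_Icc 0 R).norm_image_sub_le_of_norm_hasDerivWithin_le hd hK hx hy
  simpa using this


theorem flat {R : ℝ} (hR : 0 < R) {r0 : ℝ} (hr0 : r0 ∈ Icc 0 R) (k : ℕ) : ∀ φ : ℝ → ℝ,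
    ContDiffOn ℝ (⊤ : ℕ∞) φ (Icc 0 R) →
    (∀ ε > 0, ∃ r ∈ Icc 0 R, r ≠ r0 ∧ |r - r0| < ε ∧ φ r = 0) →
    ∃ B, 0 ≤ B ∧ ∀ r ∈ Icc 0 R, |φ r| ≤ B * |r - r0| ^ k := by
  induction k with
  | zero =>
    intro φ h _
    obtain ⟨K, hK⟩ := isCompact_Icc.exists_bound_of_continuousOn h.continuousOn
    refine ⟨max K 0, le_max_right _ _, fun r hr => ?_⟩
    rw [pow_zero, mul_one]
    exact (hK r hr).trans (le_max_left _ _)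
  | succ k ih =>
    intro φ h hz
    have hu := uniqueDiffOn_Icc hR
    have hd : ∀ r ∈ Icc 0 R, HasDerivWithinAt φ (derivWithin φ (Icc 0 R) r) (Icc 0 R) r :=
      fun r hr => (h.differentiableOn (by simp) r hr).hasDerivWithinAt
    have hφ0 : φ r0 = 0 := by
      by_contra hne
      have hc := Metric.continuousWithinAt_iff.1 (h.continuousOn r0 hr0) |φ r0| (abs_pos.2 hne)
      obtain ⟨δ, hδ, hc⟩ := hc
      obtain ⟨r, hr, _, h2, h3⟩ := hz δ hδ
      have := hc hr h2
      rw [h3, Real.dist_eq, zero_sub, abs_neg] at this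
      exact lt_irrefl _ this
    have hd' : ∀ x y : ℝ, x ∈ Icc 0 R → y ∈ Icc 0 R → x < y → φ x = 0 → φ y = 0 →
        ∃ c ∈ Ioo x y, derivWithin φ (Icc 0 R) c = 0 := by
      intro x y hx hy hxy h1 h2
      have hsub : Icc x y ⊆ Icc 0 R := Icc_subset_Icc hx.1 hy.2
      refine exists_hasDerivAt_eq_zero hxy (h.continuousOn.mono hsub) (h1.trans h2.symm) ?_
      intro c hc
      exact (hd c (hsub (Ioo_subset_Icc_self hc))).hasDerivAt
        (Icc_mem_nhds (hx.1.trans_lt hc.1) (hc.2.trans_le hy.2))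
    obtain ⟨B, hB0, hB⟩ := ih (derivWithin φ (Icc 0 R)) (h.derivWithin hu (by simp)) (by
      intro ε hε
      obtain ⟨r, hr, h1, h2, h3⟩ := hz ε hε
      rcases lt_or_gt_of_ne h1 with hlt | hlt
      · obtain ⟨c, hc, hc0⟩ := hd' r r0 hr hr0 hlt h3 hφ0
        refine ⟨c, ⟨hr.1.trans hc.1.le, hc.2.le.trans hr0.2⟩, hc.2.ne, ?_, hc0⟩
        rw [abs_lt] at h2 ⊢
        constructor <;> linarith [hc.1, hc.2]
      · obtain ⟨c, hc, hc0⟩ := hd' r0 r hr0 hr hlt hφ0 h3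
        refine ⟨c, ⟨hr0.1.trans hc.1.le, hc.2.le.trans hr.2⟩, hc.1.ne', ?_, hc0⟩
        rw [abs_lt] at h2 ⊢
        constructor <;> linarith [hc.1, hc.2])
    refine ⟨B, hB0, fun r hr => ?_⟩
    have hsub : uIcc r0 r ⊆ Icc 0 R := uIcc_subset_Icc hr0 hr
    have := (convex_uIcc r0 r).norm_image_sub_le_of_norm_hasDerivWithin_le
      (C := B * |r - r0| ^ k) (fun x hx => (hd x (hsub hx)).mono hsub) (fun x hx => ?_)
      left_mem_uIcc right_mem_uIcc
    · rw [hφ0, sub_zero, Real.norm_eq_abs, Real.norm_eq_abs] at this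
      rw [pow_succ, ← mul_assoc]
      exact this
    · refine (hB x (hsub hx)).trans ?_
      have := abs_sub_left_of_mem_uIcc hx
      gcongr

structure Jet (R t1 t2 : ℝ) (f fr frr ft frt : ℝ → ℝ → ℝ) : Prop where
  s0 : SM R t1 t2 f
  s1 : SM R t1 t2 fr
  s2 : SM R t1 t2 frr
  s3 : SM R t1 t2 ft
  s4 : SM R t1 t2 frt
  d0 : ∀ r ∈ Icc 0 R, ∀ t ∈ Ioo t1 t2, HasDerivWithinAt (fun r => f r t) (fr r t) (Icc 0 R) r
  d1 : ∀ r ∈ Icc 0 R, ∀ t ∈ Ioo t1 t2, HasDerivWithinAt (fun r => fr r t) (frr r t) (Icc 0 R) r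
  e0 : ∀ r ∈ Icc 0 R, ∀ t ∈ Ioo t1 t2, HasDerivWithinAt (fun r => ft r t) (frt r t) (Icc 0 R) r
  t0 : ∀ r ∈ Icc 0 R, ∀ t ∈ Ioo t1 t2, HasDerivAt (fun t => f r t) (ft r t) t
  t1 : ∀ r ∈ Icc 0 R, ∀ t ∈ Ioo t1 t2, HasDerivAt (fun t => fr r t) (frt r t) t

theorem SM.jet {R t1 t2 : ℝ} (hR : 0 < R) {f : ℝ → ℝ → ℝ} (h : SM R t1 t2 f) :
    ∃ fr frr ft frt, Jet R t1 t2 f fr frr ft frt := by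
  obtain ⟨fr, ft, frt, a1, a2, a3, a4, a5, a6, a7⟩ := h.deriv hR
  obtain ⟨frr, _, _, b1, _, _, b4, _⟩ := a1.deriv hR
  exact ⟨fr, frr, ft, frt, h, a1, b1, a2, a3, a4, b4, a6, a5, a7⟩

theorem Jet.mulR {R t1 t2 : ℝ} {f fr frr ft frt : ℝ → ℝ → ℝ}
    (J : Jet R t1 t2 f fr frr ft frt) :
    Jet R t1 t2 (fun r t => (R - r) * f r t) (fun r t => -f r t + (R - r) * fr r t)
      (fun r t => -2 * fr r t + (R - r) * frr r t) (fun r t => (R - r) * ft r t)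
      (fun r t => -ft r t + (R - r) * frt r t) := by
  have hs : SM R t1 t2 (fun r _ => R - r) :=
    (contDiff_const.sub contDiff_fst).contDiffOn
  have hd : ∀ r, HasDerivWithinAt (fun r => R - r) (-1) (Icc 0 R) r := fun r =>
    (hasDerivWithinAt_id r _).const_sub R
  have hm : ∀ {g : ℝ → ℝ → ℝ}, SM R t1 t2 g → SM R t1 t2 (fun r t => (R - r) * g r t) :=
    fun h => ContDiffOn.mul hs h
  refine ⟨hm J.s0, ContDiffOn.add (ContDiffOn.neg J.s0) (hm J.s1),
    ContDiffOn.add (ContDiffOn.mul contDiffOn_const J.s1) (hm J.s2), hm J.s3,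
    ContDiffOn.add (ContDiffOn.neg J.s3) (hm J.s4), ?_, ?_, ?_, ?_, ?_⟩
  · intro r hr t ht
    exact ((hd r).mul (J.d0 r hr t ht)).congr_deriv (by ring)
  · intro r hr t ht
    exact ((J.d0 r hr t ht).neg.add ((hd r).mul (J.d1 r hr t ht))).congr_deriv (by ring)
  · intro r hr t ht
    exact ((hd r).mul (J.e0 r hr t ht)).congr_deriv (by ring)
  · intro r hr t ht
    exact (J.t0 r hr t ht).const_mul _
  · intro r hr t ht
    exact (J.t0 r hr t ht).neg.add ((J.t1 r hr t ht).const_mul _)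


theorem build {R t1 t2 τ1 τ2 q C : ℝ} (hR : 0 < R) (hq : 1 / 2 ≤ q) (h1 : t1 < τ1) (h2 : τ2 < t2)
    {w wr wrr ws wrt : ℝ → ℝ → ℝ} (J : Jet R t1 t2 w wr wrr ws wrt)
    (hw0 : ∀ t ∈ Ioo t1 t2, w 0 t = 0) (hwR : ∀ t ∈ Ioo t1 t2, w R t = 0) (hC : 0 ≤ C)
    (hp : ∀ t ∈ Ioo τ1 τ2, ∀ r ∈ Ioo 0 R,
      |ws r t - wrr r t - 2 * q / r * wr r t + 2 * q / r ^ 2 * w r t| ≤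
        C * (|w r t| / r + |wr r t|)) :
    ∃ c C' K ur urr ut urt, Sol R c C' K τ1 τ2 (fun r t => r ^ q * w r t) ur urr ut urt := by
  have hin : ∀ t ∈ Ioo τ1 τ2, t ∈ Ioo t1 t2 := fun t ht => ⟨h1.trans ht.1, ht.2.trans h2⟩
  have hq0 : 0 < q := by linarith
  obtain ⟨L1, hL10, hL1⟩ := J.s1.bdd h1 h2
  obtain ⟨L2, hL20, hL2⟩ := J.s4.bdd h1 h2
  set L := L1 + L2 with hL
  have hL0 : 0 ≤ L := by positivity
  have hwr : ∀ t ∈ Ioo τ1 τ2, ∀ r ∈ Icc 0 R, |wr r t| ≤ L := fun t ht r hr =>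
    (hL1 r hr t (Ioo_subset_Icc_self ht)).trans (by linarith)
  have hwrt : ∀ t ∈ Ioo τ1 τ2, ∀ r ∈ Icc 0 R, |wrt r t| ≤ L := fun t ht r hr =>
    (hL2 r hr t (Ioo_subset_Icc_self ht)).trans (by linarith)
  have m0 : (0:ℝ) ∈ Icc 0 R := ⟨le_rfl, hR.le⟩
  have mR : R ∈ Icc 0 R := ⟨hR.le, le_rfl⟩
  have zero : ∀ x ∈ Icc 0 R, (∀ t ∈ Ioo t1 t2, w x t = 0) → ∀ t ∈ Ioo t1 t2, ws x t = 0 := by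
    intro x hx h t ht
    refine (J.t0 x hx t ht).unique ((hasDerivAt_const t (0:ℝ)).congr_of_eventuallyEq ?_)
    filter_upwards [isOpen_Ioo.mem_nhds ht] with s hs using h s hs
  have hw : ∀ t ∈ Ioo τ1 τ2, ∀ r ∈ Icc 0 R, |w r t| ≤ L * r := by
    intro t ht r hr
    have := lip0 (fun r hr => J.d0 r hr t (hin t ht)) (fun r hr => hwr t ht r hr) m0 hr
    rwa [hw0 t (hin t ht), sub_zero, sub_zero, abs_of_nonneg hr.1] at this
  have hws : ∀ t ∈ Ioo τ1 τ2, ∀ r ∈ Icc 0 R, |ws r t| ≤ L * r := by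
    intro t ht r hr
    have := lip0 (fun r hr => J.e0 r hr t (hin t ht)) (fun r hr => hwrt t ht r hr) m0 hr
    rwa [zero 0 m0 hw0 t (hin t ht), sub_zero, sub_zero, abs_of_nonneg hr.1] at this
  have hdiv : ∀ {x r : ℝ}, r ∈ Icc 0 R → |x| ≤ L * r → |x / r| ≤ L := by
    intro x r hr h
    rcases hr.1.eq_or_lt with h0 | h0
    · rw [← h0]; simpa using hL0
    · rw [abs_div, abs_of_pos h0, div_le_iff₀ h0]; exact h
  set A := R ^ (q - 1 / 2) with hA
  have hA0 : 0 ≤ A := by positivity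
  have hrq : ∀ r ∈ Icc 0 R, r ^ q ≤ A * √r := by
    intro r hr
    rcases hr.1.eq_or_lt with h0 | h0
    · rw [← h0, Real.zero_rpow hq0.ne']; positivity
    · have : r ^ q = r ^ (q - 1 / 2) * √r := by
        rw [Real.sqrt_eq_rpow, ← Real.rpow_add h0]; ring_nf
      rw [this]
      have := Real.rpow_le_rpow hr.1 hr.2 (by linarith : 0 ≤ q - 1 / 2)
      gcongr
  have hrq0 : ∀ r ∈ Icc 0 R, 0 ≤ r ^ q := fun r hr => Real.rpow_nonneg hr.1 _
  have hsq : ∀ r ∈ Icc 0 R, √r ≤ √R := fun r hr => Real.sqrt_le_sqrt hr.2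
  set K := A * (L + q * L) * (1 + √R) with hK
  have hsR : 0 ≤ √R := Real.sqrt_nonneg _
  have hK1 : A * L ≤ K := by
    have e : K = A * L + (A * L * √R + A * (q * L) * (1 + √R)) := by rw [hK]; ring
    rw [e]; exact le_add_of_nonneg_right (by positivity)
  have hK2 : A * L * √R ≤ K := by
    have e : K = A * L * √R + (A * L + A * (q * L) * (1 + √R)) := by rw [hK]; ring
    rw [e]; exact le_add_of_nonneg_right (by positivity)
  have hK3 : A * (L + q * L) ≤ K := by
    have e : K = A * (L + q * L) + A * (L + q * L) * √R := by rw [hK]; ring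
    rw [e]; exact le_add_of_nonneg_right (by positivity)
  have hK4 : A * (L + q * L) * √R ≤ K := by
    have e : K = A * (L + q * L) * √R + A * (L + q * L) := by rw [hK]; ring
    rw [e]; exact le_add_of_nonneg_right (by positivity)
  have two : ∀ {x y r : ℝ}, r ∈ Icc 0 R → |x| ≤ L → |y| ≤ L * r →
      |r ^ q * (x + q * (y / r))| ≤ A * (L + q * L) * √r := by
    intro x y r hr hx hy
    have hy' := hdiv hr hy
    rw [abs_mul, abs_of_nonneg (hrq0 r hr)]
    have h3 : |x + q * (y / r)| ≤ L + q * L := by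
      refine (abs_add_le _ _).trans ?_
      rw [abs_mul, abs_of_pos hq0]
      gcongr
    have := mul_le_mul (hrq r hr) h3 (abs_nonneg _) (by positivity)
    linarith
  have one : ∀ {y r : ℝ}, r ∈ Icc 0 R → |y| ≤ L * r → |r ^ q * y| ≤ A * L * (r * √r) := by
    intro y r hr hy
    rw [abs_mul, abs_of_nonneg (hrq0 r hr)]
    have := mul_le_mul (hrq r hr) hy (abs_nonneg _) (by positivity)
    linarith
  have hdr : ∀ r ∈ Ioo 0 R, HasDerivAt (fun r : ℝ => r ^ q) (q * (r ^ q / r)) r := by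
    intro r hr
    refine (Real.hasDerivAt_rpow_const (Or.inl hr.1.ne')).congr_deriv ?_
    rw [Real.rpow_sub_one hr.1.ne']
  have nh : ∀ r ∈ Ioo 0 R, Icc 0 R ∈ nhds r := fun r hr => Icc_mem_nhds hr.1 hr.2
  have D0 : ∀ t ∈ Ioo τ1 τ2, ∀ r ∈ Ioo 0 R, HasDerivAt (fun r => w r t) (wr r t) r :=
    fun t ht r hr => (J.d0 r (Ioo_subset_Icc_self hr) t (hin t ht)).hasDerivAt (nh r hr)
  have D1 : ∀ t ∈ Ioo τ1 τ2, ∀ r ∈ Ioo 0 R, HasDerivAt (fun r => wr r t) (wrr r t) r :=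
    fun t ht r hr => (J.d1 r (Ioo_subset_Icc_self hr) t (hin t ht)).hasDerivAt (nh r hr)
  have E0 : ∀ t ∈ Ioo τ1 τ2, ∀ r ∈ Ioo 0 R, HasDerivAt (fun r => ws r t) (wrt r t) r :=
    fun t ht r hr => (J.e0 r (Ioo_subset_Icc_self hr) t (hin t ht)).hasDerivAt (nh r hr)
  have crq : ContinuousOn (fun r : ℝ => r ^ q) (Icc 0 R) :=
    (Real.continuous_rpow_const hq0.le).continuousOn
  have b1 : ∀ t ∈ Ioo τ1 τ2, ∀ r ∈ Icc 0 R,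
      |r ^ q * (wr r t + q * (w r t / r))| ≤ K * √r := fun t ht r hr =>
    (two hr (hwr t ht r hr) (hw t ht r hr)).trans
      (mul_le_mul_of_nonneg_right hK3 (Real.sqrt_nonneg _))
  have c1 : ∀ {s : Set ℝ}, s ⊆ Icc 0 R → (∀ r ∈ s, r ≠ 0) → ∀ {f g : ℝ → ℝ → ℝ},
      SM R t1 t2 f → SM R t1 t2 g → ∀ t ∈ Ioo τ1 τ2,
      ContinuousOn (fun r => r ^ q * (f r t + q * (g r t / r))) s := by
    intro s hs hs0 f g hf hg t ht
    exact (crq.mono hs).mul (((hf.cr (hin t ht)).mono hs).add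
      (continuousOn_const.mul (((hg.cr (hin t ht)).mono hs).div continuousOn_id hs0)))
  refine ⟨q ^ 2 + q, C * (1 + q), K, fun r t => r ^ q * (wr r t + q * (w r t / r)),
    fun r t => r ^ q * (wrr r t + 2 * q / r * wr r t + q * (q - 1) / r ^ 2 * w r t),
    fun r t => r ^ q * ws r t, fun r t => r ^ q * (wrt r t + q * (ws r t / r)), ?_⟩
  refine
  { hR := hR
    hc := by nlinarith
    h0 := fun t ht => crq.mul (J.s0.cr (hin t ht))
    h1 := ?_
    h2 := ?_
    k0 := fun t ht => crq.mul (J.s3.cr (hin t ht))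
    k1 := c1 Ioo_subset_Icc_self (fun r hr => hr.1.ne') J.s4 J.s3
    d0 := ?_
    d1 := ?_
    e0 := ?_
    t0 := ?_
    t1 := ?_
    b0 := ?_
    b1 := b1
    b2 := ?_
    b3 := ?_
    uR := ?_
    utR := ?_
    pde := ?_ }
  · intro t ht r hr
    rcases hr.1.eq_or_lt with h0 | h0
    · subst h0
      have hlim : Tendsto (fun r => K * √r) (nhdsWithin 0 (Icc 0 R)) (nhds 0) := by
        have : ContinuousAt (fun r => K * √r) 0 := by fun_prop
        have h := this.tendsto.mono_left (nhdsWithin_le_nhds (s := Icc 0 R))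
        simpa using h
      have := squeeze_zero_norm' (f := fun r => r ^ q * (wr r t + q * (w r t / r)))
        (by filter_upwards [self_mem_nhdsWithin] with r hr using b1 t ht r hr) hlim
      unfold ContinuousWithinAt
      simpa [Real.zero_rpow hq0.ne'] using this
    · have := c1 (s := Ioc 0 R) Ioc_subset_Icc_self (fun r hr => hr.1.ne') J.s1 J.s0 t ht r ⟨h0, hr.2⟩
      refine this.mono_of_mem_nhdsWithin ?_
      filter_upwards [self_mem_nhdsWithin, mem_nhdsWithin_of_mem_nhds (Ioi_mem_nhds h0)] with x hx hx2
      exact ⟨hx2, hx.2⟩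
  · intro t ht
    have hs : Ioo 0 R ⊆ Icc 0 R := Ioo_subset_Icc_self
    have hn : ∀ r ∈ Ioo 0 R, r ≠ 0 := fun r hr => hr.1.ne'
    have hn2 : ∀ r ∈ Ioo 0 R, r ^ 2 ≠ 0 := fun r hr => pow_ne_zero 2 hr.1.ne'
    exact (crq.mono hs).mul ((((J.s2.cr (hin t ht)).mono hs).add
      ((continuousOn_const.div continuousOn_id hn).mul ((J.s1.cr (hin t ht)).mono hs))).add
      ((continuousOn_const.div (continuousOn_id.pow 2) hn2).mul ((J.s0.cr (hin t ht)).mono hs)))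
  · intro t ht r hr
    refine ((hdr r hr).mul (D0 t ht r hr)).congr_deriv ?_
    ring
  · intro t ht r hr
    have hr0 : r ≠ 0 := hr.1.ne'
    refine ((hdr r hr).mul ((D1 t ht r hr).add
      (((D0 t ht r hr).div (hasDerivAt_id r) hr0).const_mul q))).congr_deriv ?_
    simp only [id, Pi.add_apply, Pi.div_apply]
    field_simp
    ring
  · intro t ht r hr
    refine ((hdr r hr).mul (E0 t ht r hr)).congr_deriv ?_
    ring
  · intro t ht r hr
    exact (J.t0 r (Ioo_subset_Icc_self hr) t (hin t ht)).const_mul _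
  · intro t ht r hr
    have hr' := Ioo_subset_Icc_self hr
    exact ((J.t1 r hr' t (hin t ht)).add
      (((J.t0 r hr' t (hin t ht)).div_const r).const_mul q)).const_mul _
  · intro t ht r hr
    exact (one hr (hw t ht r hr)).trans
      (mul_le_mul_of_nonneg_right hK1 (mul_nonneg hr.1 (Real.sqrt_nonneg _)))
  · intro t ht r hr
    refine (one hr (hws t ht r hr)).trans ?_
    have h3 : A * L * (r * √r) ≤ A * L * (r * √R) := by
      have := hsq r hr
      have := hr.1
      gcongr
    have h4 := mul_le_mul_of_nonneg_right hK2 hr.1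
    linarith
  · intro t ht r hr
    have hr' := Ioo_subset_Icc_self hr
    refine (two hr' (hwrt t ht r hr') (hws t ht r hr')).trans ?_
    refine le_trans ?_ hK4
    have := hsq r hr'
    gcongr
  · intro t ht
    simp [hwR t (hin t ht)]
  · intro t ht
    simp [zero R mR hwR t (hin t ht)]
  · intro t ht r hr
    have hr0 : r ≠ 0 := hr.1.ne'
    have hrp := hr.1
    have hx : 0 ≤ r ^ q := hrq0 r (Ioo_subset_Icc_self hr)
    have e : r ^ q * ws r t - r ^ q * (wrr r t + 2 * q / r * wr r t + q * (q - 1) / r ^ 2 * w r t) +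
        (q ^ 2 + q) / r ^ 2 * (r ^ q * w r t) =
        r ^ q * (ws r t - wrr r t - 2 * q / r * wr r t + 2 * q / r ^ 2 * w r t) := by
      field_simp
      ring
    rw [e, abs_mul, abs_mul, abs_mul, abs_of_nonneg hx]
    have h3 := mul_le_mul_of_nonneg_left (hp t ht r hr) hx
    refine h3.trans ?_
    have h4 : |wr r t| ≤ |wr r t + q * (w r t / r)| + q * (|w r t| / r) := by
      have h5 : wr r t = (wr r t + q * (w r t / r)) - q * (w r t / r) := by ring
      have h6 := abs_sub (wr r t + q * (w r t / r)) (q * (w r t / r))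
      rw [← h5] at h6
      refine h6.trans (le_of_eq ?_)
      rw [abs_mul, abs_div, abs_of_pos hq0, abs_of_pos hrp]
    have h5 : |w r t| / r + |wr r t| ≤ (1 + q) * (|w r t| / r + |wr r t + q * (w r t / r)|) := by
      have : 0 ≤ q * |wr r t + q * (w r t / r)| := by positivity
      linarith
    have h6 := mul_le_mul_of_nonneg_left h5 (mul_nonneg hx hC)
    refine le_trans (le_of_eq ?_) (h6.trans (le_of_eq ?_))
    · ring
    · ring


theorem errR {K K' c0 R r μ v vr : ℝ} (hr : 0 < r) (hrR : r < R) (hμ : 0 ≤ μ) (hc0 : 0 < c0)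
    (hK : 0 ≤ K) (hv : |v| ≤ K * r) (hvr : |vr| ≤ K) (hlow : c0 ≤ |v| + K * (R - r))
    (hK' : |-v + (R - r) * vr| ≤ K') :
    |2 * vr + μ / r * v| ≤ ((2 * (2 * K + μ * K) * K' + 8 * K ^ 2 * (2 * R + R * μ)) / c0 ^ 2) *
      (|(R - r) * v| / r + |-v + (R - r) * vr|) := by
  set wr := -v + (R - r) * vr with hwr
  set w := (R - r) * v with hw
  set E := 2 * vr + μ / r * v with hE
  have hs : 0 < R - r := by linarith
  have hK'0 : 0 ≤ K' := (abs_nonneg _).trans hK'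
  have hwr0 := abs_nonneg wr
  have hX : 0 ≤ |w| / r := by positivity
  have hR : 0 < R := by linarith
  have h1 : |E| ≤ 2 * K + μ * K := by
    refine (abs_add_le _ _).trans ?_
    rw [abs_mul, abs_mul, abs_div, abs_of_nonneg hμ, abs_of_pos hr, abs_of_pos (zero_lt_two (α := ℝ))]
    have : μ / r * |v| ≤ μ * K := by
      rw [div_mul_eq_mul_div, div_le_iff₀ hr, mul_assoc]
      gcongr
    linarith
  have h2 : c0 ≤ |wr| + 2 * K * (R - r) := by
    have h3 : |v| ≤ |(R - r) * vr| + |wr| := by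
      have : v = (R - r) * vr - wr := by rw [hwr]; ring
      rw [this]
      exact abs_sub _ _
    rw [abs_mul, abs_of_pos hs] at h3
    have : (R - r) * |vr| ≤ (R - r) * K := by gcongr
    linarith
  have h3 : |(R - r) ^ 2 * E| ≤ (2 * R + R * μ) * (|w| / r + |wr|) := by
    have e : (R - r) ^ 2 * E = 2 * (R - r) * wr + 2 * r * (w / r) + (R - r) * μ * (w / r) := by
      rw [hE, hwr, hw]
      field_simp
      ring
    rw [e]
    refine (abs_add_le _ _).trans ((add_le_add_left (abs_add_le _ _) _).trans ?_)
    rw [abs_mul, abs_mul (2 * r), abs_mul ((R - r) * μ), abs_div, abs_of_pos hr,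
      abs_of_pos (by positivity : 0 < 2 * (R - r)), abs_of_pos (by positivity : 0 < 2 * r),
      abs_of_nonneg (by positivity : 0 ≤ (R - r) * μ)]
    have a1 : 2 * (R - r) * |wr| ≤ 2 * R * |wr| := by gcongr; linarith
    have a3 : (R - r) * μ * (|w| / r) ≤ R * μ * (|w| / r) := by gcongr; linarith
    have a2 : 2 * r * (|w| / r) ≤ 2 * R * (|w| / r) := by gcongr
    have a4 : 0 ≤ R * μ * |wr| := by positivity
    linarith
  rw [abs_mul, abs_of_pos (by positivity : 0 < (R - r) ^ 2)] at h3
  rw [div_mul_eq_mul_div, le_div_iff₀ (by positivity)]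
  have h4 : c0 ^ 2 ≤ 2 * (|wr| ^ 2 + (2 * K * (R - r)) ^ 2) := by
    have := pow_le_pow_left₀ hc0.le h2 2
    nlinarith [sq_nonneg (|wr| - 2 * K * (R - r))]
  have h5 : |E| * |wr| ^ 2 ≤ (2 * K + μ * K) * K' * |wr| := by
    rw [sq, ← mul_assoc]
    gcongr
  have h6 := mul_le_mul_of_nonneg_left h4 (abs_nonneg E)
  have h7 := mul_le_mul_of_nonneg_left h3 (by positivity : 0 ≤ 8 * K ^ 2)
  have h8 : 0 ≤ 2 * (2 * K + μ * K) * K' * (|w| / r) := by positivity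
  nlinarith

theorem sol_exists {m : ℕ} (hm : 2 ≤ m) {R t1 t2 : ℝ} (hR : 0 < R)
    {b v : ℝ → ℝ → ℝ} (hb : SM R t1 t2 b)
    (hb0 : ∀ t ∈ Ioo t1 t2, b 0 t = (m : ℝ) - 1) (hv : SM R t1 t2 v)
    (hpde : ∀ r ∈ Ioo (0:ℝ) R, ∀ t ∈ Ioo t1 t2,
      deriv (fun s => v r s) t =
        deriv (deriv (fun x => v x t)) r + (((m : ℝ) - 1) / r) * deriv (fun x => v x t) r
          - (b r t / r ^ 2) * v r t)
    (hbcR : (∀ t ∈ Ioo t1 t2, v R t = 0) ∨ (∀ t ∈ Ioo t1 t2, v R t ≠ 0)) :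
    ∃ q : ℝ, ∃ χ : ℝ → ℝ, 0 < q ∧ ContinuousOn χ (Icc 0 R) ∧ (∀ r ∈ Ioo 0 R, χ r ≠ 0) ∧
      ∀ τ1 τ2, t1 < τ1 → τ1 ≤ τ2 → τ2 < t2 → ∃ c C K ur urr ut urt,
        Sol R c C K τ1 τ2 (fun r t => r ^ q * (χ r * v r t)) ur urr ut urt := by
  have hm2 : (2:ℝ) ≤ m := by exact_mod_cast hm
  obtain ⟨vr, vrr, vt, vrt, J⟩ := hv.jet hR
  obtain ⟨br, _, _, _, Jb⟩ := hb.jet hR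
  have nh : ∀ r ∈ Ioo 0 R, Icc 0 R ∈ nhds r := fun r hr => Icc_mem_nhds hr.1 hr.2
  have m0 : (0:ℝ) ∈ Icc 0 R := ⟨le_rfl, hR.le⟩
  have mR : R ∈ Icc 0 R := ⟨hR.le, le_rfl⟩
  have P : ∀ r ∈ Ioo (0:ℝ) R, ∀ t ∈ Ioo t1 t2,
      vt r t = vrr r t + ((m : ℝ) - 1) / r * vr r t - b r t / r ^ 2 * v r t := by
    intro r hr t ht
    have d : ∀ x ∈ Ioo 0 R, deriv (fun x => v x t) x = vr x t := fun x hx =>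
      ((J.d0 x (Ioo_subset_Icc_self hx) t ht).hasDerivAt (nh x hx)).deriv
    have h1 := (J.t0 r (Ioo_subset_Icc_self hr) t ht).deriv
    have h2 : deriv (deriv (fun x => v x t)) r = vrr r t := by
      have : deriv (fun x => v x t) =ᶠ[nhds r] fun x => vr x t := by
        filter_upwards [isOpen_Ioo.mem_nhds hr] with x hx using d x hx
      rw [this.deriv_eq]
      exact ((J.d1 r (Ioo_subset_Icc_self hr) t ht).hasDerivAt (nh r hr)).deriv
    have := hpde r hr t ht
    rwa [h1, h2, d r hr] at this
  have v0 : ∀ t ∈ Ioo t1 t2, v 0 t = 0 := by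
    intro t ht
    have hc : ContinuousOn (fun r => r ^ 2 * (vt r t - vrr r t) - ((m : ℝ) - 1) * r * vr r t
        + b r t * v r t) (Icc 0 R) :=
      (((continuousOn_id.pow 2).mul ((J.s3.cr ht).sub (J.s2.cr ht))).sub
        ((continuousOn_const.mul continuousOn_id).mul (J.s1.cr ht))).add ((hb.cr ht).mul (hv.cr ht))
    have hz : EqOn (fun r => r ^ 2 * (vt r t - vrr r t) - ((m : ℝ) - 1) * r * vr r t
        + b r t * v r t) (fun _ => 0) (Ioo 0 R) := by
      intro r hr
      have hr0 : r ≠ 0 := hr.1.ne'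
      simp only
      rw [P r hr t ht]
      field_simp
      ring
    have := hz.of_subset_closure hc continuousOn_const Ioo_subset_Icc_self
      (by rw [closure_Ioo hR.ne]) m0
    simp only [hb0 t ht] at this
    have h3 : ((m : ℝ) - 1) * v 0 t = 0 := by linarith
    rcases mul_eq_zero.1 h3 with h | h
    · linarith
    · exact h
  have key : ∀ τ1 τ2, t1 < τ1 → τ1 ≤ τ2 → τ2 < t2 → ∃ C, 0 ≤ C ∧ ∀ t ∈ Ioo τ1 τ2, ∀ r ∈ Ioo 0 R,
      |((m : ℝ) - 1 - b r t) / r ^ 2| ≤ C / r := by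
    intro τ1 τ2 h1 _ h2
    obtain ⟨C, hC0, hC⟩ := Jb.s1.bdd h1 h2
    refine ⟨C, hC0, fun t ht r hr => ?_⟩
    have ht' : t ∈ Ioo t1 t2 := ⟨h1.trans ht.1, ht.2.trans h2⟩
    have := lip0 (fun r hr => Jb.d0 r hr t ht') (fun r hr => hC r hr t (Ioo_subset_Icc_self ht))
      m0 (Ioo_subset_Icc_self hr)
    rw [hb0 t ht', sub_zero, abs_of_pos hr.1, abs_sub_comm] at this
    have hrp := hr.1
    rw [abs_div, abs_of_pos (by positivity : 0 < r ^ 2), div_le_div_iff₀ (by positivity) hrp]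
    calc _ ≤ C * r * r := by gcongr
      _ = _ := by ring
  set q : ℝ := ((m : ℝ) - 1) / 2 with hq
  have hq2 : 1 / 2 ≤ q := by rw [hq]; linarith
  have hmq : (m : ℝ) - 1 = 2 * q := by rw [hq]; ring
  rcases hbcR with hD | hN
  · refine ⟨q, fun _ => 1, by linarith, continuousOn_const, fun _ _ => one_ne_zero, ?_⟩
    intro τ1 τ2 h1 h12 h2
    obtain ⟨C, hC0, hC⟩ := key τ1 τ2 h1 h12 h2
    simp only [one_mul]
    refine build hR hq2 h1 h2 J v0 hD hC0 (fun t ht r hr => ?_)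
    have ht' : t ∈ Ioo t1 t2 := ⟨h1.trans ht.1, ht.2.trans h2⟩
    have e : vt r t - vrr r t - 2 * q / r * vr r t + 2 * q / r ^ 2 * v r t =
        ((m : ℝ) - 1 - b r t) / r ^ 2 * v r t := by
      rw [P r hr t ht', hmq]; ring
    rw [e, abs_mul]
    have h3 := mul_le_mul_of_nonneg_right (hC t ht r hr) (abs_nonneg (v r t))
    have h4 : 0 ≤ C * |vr r t| := by positivity
    calc _ ≤ _ := h3
      _ = C * (|v r t| / r) := by ring
      _ ≤ _ := by linarith
  · refine ⟨q, fun r => R - r, by linarith, by fun_prop, fun r hr => by linarith [hr.2], ?_⟩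
    intro τ1 τ2 h1 h12 h2
    obtain ⟨C, hC0, hC⟩ := key τ1 τ2 h1 h12 h2
    obtain ⟨K, hK0, hK⟩ := J.s1.bdd h1 h2
    obtain ⟨K', _, hK'⟩ := J.mulR.s1.bdd h1 h2
    obtain ⟨c0, hc0, hc⟩ : ∃ c0 > 0, ∀ t ∈ Icc τ1 τ2, c0 ≤ |v R t| := by
      have hcont : ContinuousOn (fun t => |v R t|) (Icc τ1 τ2) := fun t ht =>
        (J.t0 R mR t ⟨h1.trans_le ht.1, ht.2.trans_lt h2⟩).continuousAt.abs.continuousWithinAt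
      obtain ⟨s, hs, hmin⟩ := isCompact_Icc.exists_isMinOn (nonempty_Icc.2 h12) hcont
      exact ⟨|v R s|, abs_pos.2 (hN s ⟨h1.trans_le hs.1, hs.2.trans_lt h2⟩), fun t ht => hmin ht⟩
    set C2 := (2 * (2 * K + (2 * q) * K) * K' + 8 * K ^ 2 * (2 * R + R * (2 * q))) / c0 ^ 2 with hC2
    have hK'0 : 0 ≤ K' := by assumption
    have hq0 : 0 ≤ q := by linarith
    have hC20 : 0 ≤ C2 := by positivity
    refine build (C := C + C2) hR hq2 h1 h2 J.mulR (fun t ht => by simp [v0 t ht])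
      (fun t ht => by simp) (by positivity) (fun t ht r hr => ?_)
    have ht' : t ∈ Ioo t1 t2 := ⟨h1.trans ht.1, ht.2.trans h2⟩
    have hr' := Ioo_subset_Icc_self hr
    have htc := Ioo_subset_Icc_self ht
    have e : (R - r) * vt r t - (-2 * vr r t + (R - r) * vrr r t)
        - 2 * q / r * (-v r t + (R - r) * vr r t) + 2 * q / r ^ 2 * ((R - r) * v r t) =
        ((m : ℝ) - 1 - b r t) / r ^ 2 * ((R - r) * v r t) + (2 * vr r t + 2 * q / r * v r t) := by
      rw [P r hr t ht', hmq]; ring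
    rw [e]
    have hl : ∀ x ∈ Icc 0 R, |v r t - v x t| ≤ K * |r - x| := fun x hx =>
      lip0 (fun r hr => J.d0 r hr t ht') (fun r hr => hK r hr t htc) hx hr'
    have g1 : |v r t| ≤ K * r := by
      have := hl 0 m0
      rwa [v0 t ht', sub_zero, sub_zero, abs_of_pos hr.1] at this
    have g2 : c0 ≤ |v r t| + K * (R - r) := by
      have := hl R mR
      rw [abs_sub_comm r, abs_of_pos (by linarith [hr.2] : 0 < R - r)] at this
      have h4 := hc t htc
      have h5 := abs_sub_abs_le_abs_sub (v R t) (v r t)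
      rw [abs_sub_comm] at h5
      linarith
    have := errR (μ := 2 * q) hr.1 hr.2 (by linarith) hc0 hK0 g1 (hK r hr' t htc) g2
      (hK' r hr' t htc)
    rw [← hC2] at this
    refine (abs_add_le _ _).trans ((add_le_add_right this _).trans ?_)
    rw [abs_mul]
    have h3 := mul_le_mul_of_nonneg_right (hC t ht r hr) (abs_nonneg ((R - r) * v r t))
    have h4 : 0 ≤ C * |-v r t + (R - r) * vr r t| := by positivity
    have h5 : C / r * |(R - r) * v r t| = C * (|(R - r) * v r t| / r) := by ring
    linarith


theorem zero_number_finite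
    (m : ℕ) (hm : 2 ≤ m) (R t1 t2 : ℝ) (hR : 0 < R) (ht12 : t1 < t2)
    (b v : ℝ → ℝ → ℝ)
    (hb_smooth : ContDiffOn ℝ (⊤ : ℕ∞) (fun p : ℝ × ℝ => b p.1 p.2) (Icc 0 R ×ˢ Ioo t1 t2))
    (hb_bdd : ∃ C : ℝ, ∀ r ∈ Icc (0:ℝ) R, ∀ t ∈ Ioo t1 t2, |b r t| ≤ C)
    (hb0 : ∀ t ∈ Ioo t1 t2, b 0 t = (m : ℝ) - 1)
    (hbr0 : ∀ t ∈ Ioo t1 t2, deriv (fun x => b x t) 0 = 0)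
    (hv_smooth : ContDiffOn ℝ (⊤ : ℕ∞) (fun p : ℝ × ℝ => v p.1 p.2) (Icc 0 R ×ˢ Ioo t1 t2))
    (hpde : ∀ r ∈ Ioo (0:ℝ) R, ∀ t ∈ Ioo t1 t2,
      deriv (fun s => v r s) t =
        deriv (deriv (fun x => v x t)) r + (((m : ℝ) - 1) / r) * deriv (fun x => v x t) r
          - (b r t / r ^ 2) * v r t)
    (hbc0 : (∀ t ∈ Ioo t1 t2, v 0 t = 0) ∨ (∀ t ∈ Ioo t1 t2, v 0 t ≠ 0))
    (hbcR : (∀ t ∈ Ioo t1 t2, v R t = 0) ∨ (∀ t ∈ Ioo t1 t2, v R t ≠ 0))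
    (hnz : ¬ ∀ r ∈ Icc (0:ℝ) R, ∀ t ∈ Ioo t1 t2, v r t = 0)
    :
    ∀ t ∈ Ioo t1 t2, {r ∈ Icc (0:ℝ) R | v r t = 0}.Finite := by
  intro t0 ht0
  by_contra hinf
  obtain ⟨q, χ, hq, hχ, hχ0, hS⟩ := sol_exists hm hR hb_smooth hb0 hv_smooth hpde hbcR
  have hv : SM R t1 t2 v := hv_smooth
  have ext : ∀ t ∈ Ioo t1 t2, (∀ r ∈ Icc 0 R, r ^ q * (χ r * v r t) = 0) →
      ∀ r ∈ Icc 0 R, v r t = 0 := by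
    intro t ht h
    have hz : EqOn (fun r => v r t) (fun _ => 0) (Ioo 0 R) := by
      intro r hr
      have h1 := h r (Ioo_subset_Icc_self hr)
      have h2 := (Real.rpow_pos_of_pos hr.1 q).ne'
      have h3 := hχ0 r hr
      simpa [h2, h3] using h1
    exact fun r hr => hz.of_subset_closure (hv.cr ht) continuousOn_const Ioo_subset_Icc_self
      (by rw [closure_Ioo hR.ne]) hr
  obtain ⟨r0, hr0, hacc⟩ := (show {r ∈ Icc (0:ℝ) R | v r t0 = 0}.Infinite from hinf).exists_accPt_of_subset_isCompact
    isCompact_Icc (fun r hr => hr.1)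
  have hacc' : ∀ ε > 0, ∃ r ∈ Icc 0 R, r ≠ r0 ∧ |r - r0| < ε ∧ v r t0 = 0 := by
    intro ε hε
    obtain ⟨r, ⟨h1, h2⟩, h3⟩ := accPt_iff_nhds.1 hacc (Metric.ball r0 ε) (Metric.ball_mem_nhds _ hε)
    exact ⟨r, h2.1, h3, by simpa [Real.dist_eq] using h1, h2.2⟩
  obtain ⟨X, hX⟩ := isCompact_Icc.exists_bound_of_continuousOn
    (((Real.continuous_rpow_const hq.le).continuousOn (s := Icc 0 R)).mul hχ)
  have back : ∀ p ∈ Ioo t1 t0, ∀ r ∈ Icc 0 R, v r p = 0 := by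
    intro p hp
    obtain ⟨τ1, h1, h1'⟩ := exists_between hp.1
    obtain ⟨τ2, h2, h2'⟩ := exists_between ht0.2
    have hp2 := hp.2
    obtain ⟨c, C, K, ur, urr, ut, urt, S⟩ := hS τ1 τ2 h1 (by linarith) h2'
    refine ext p ⟨hp.1, by linarith⟩ ?_
    refine bu_abs (p := p) (q := t0) S ⟨h1', by linarith⟩ ⟨by linarith, h2⟩ hp.2 hr0 (fun k => ?_)
    obtain ⟨B, hB0, hB⟩ := flat hR hr0 k _ (hv.contr ht0) hacc'
    refine ⟨X * B, fun r hr => ?_⟩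
    have h3 := hX r hr
    have h4 := hB r hr
    rw [Real.norm_eq_abs] at h3
    rw [← mul_assoc, abs_mul, mul_assoc X]
    exact mul_le_mul h3 h4 (abs_nonneg _) ((abs_nonneg _).trans h3)
  rcases hbcR with hD | hN
  · refine hnz (fun r hr t ht => ?_)
    by_cases htt : t < t0
    · exact back t ⟨ht.1, htt⟩ r hr
    · push Not at htt
      obtain ⟨p, hp, hp'⟩ := exists_between ht0.1
      obtain ⟨τ1, h1, h1'⟩ := exists_between hp
      obtain ⟨τ2, h2, h2'⟩ := exists_between ht.2
      obtain ⟨c, C, K, ur, urr, ut, urt, S⟩ := hS τ1 τ2 h1 (by linarith) h2'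
      refine ext t ht (fu_abs (p := p) (q := t) S ⟨h1', by linarith⟩ ⟨by linarith, h2⟩
        (by linarith) (fun x hx => ?_)) r hr
      simp [back p ⟨hp, hp'⟩ x hx]
  · obtain ⟨p, hp, hp'⟩ := exists_between ht0.1
    exact hN p ⟨hp, hp'.trans ht0.2⟩ (back p ⟨hp, hp'⟩ R ⟨hR.le, le_rfl⟩)
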